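/- Every 5-edge-connected graph with at most seven edge-cuts of size 5 is Z_3-connected. -/

import Mathlib

open Finset

/-- A finite multigraph without loops: each edge `e` has two distinct
endpoints `fst e` and `snd e`.  An orientation is a map `D : E → Bool`,
where `D e = true` means `e` is directed from `fst e` to `snd e`. -/
structure Multigraph (V : Type) (E : Type) where
  fst : E → V
  snd : E → V
  no_loop : ∀ e, fst e ≠ snd e

namespace Multigraph

variable {V E : Type} [Fintype V] [DecidableEq V] [Fintype E] [DecidableEq E]

/-- The tail (initial vertex) of edge `e` under orientation `D`. -/
def tail (G : Multigraph V E) (D : E → Bool) (e : E) : V :=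
  if D e then G.fst e else G.snd e

/-- The head (terminal vertex) of edge `e` under orientation `D`. -/
def head (G : Multigraph V E) (D : E → Bool) (e : E) : V :=
  if D e then G.snd e else G.fst e

/-- Outdegree `d⁺_D(v)` (as an integer, for convenience). -/
def outDeg (G : Multigraph V E) (D : E → Bool) (v : V) : ℤ :=
  ((univ.filter fun e => G.tail D e = v).card : ℤ)

/-- Indegree `d⁻_D(v)`. -/
def inDeg (G : Multigraph V E) (D : E → Bool) (v : V) : ℤ :=
  ((univ.filter fun e => G.head D e = v).card : ℤ)

/-- `e` is incident with `v`. -/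
def Incident (G : Multigraph V E) (v : V) (e : E) : Prop :=
  G.fst e = v ∨ G.snd e = v

instance (G : Multigraph V E) (v : V) : DecidablePred (G.Incident v) := fun e =>
  inferInstanceAs (Decidable (G.fst e = v ∨ G.snd e = v))

/-- The degree of a vertex. -/
def degree (G : Multigraph V E) (v : V) : ℕ :=
  (univ.filter fun e => G.Incident v e).card

/-- The edge-cut `∂_G(A)`: edges with exactly one endpoint in `A`. -/
def cut (G : Multigraph V E) (A : Finset V) : Finset E :=
  univ.filter fun e => ¬ ((G.fst e ∈ A) ↔ (G.snd e ∈ A))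

/-- `G` is `k`-edge-connected: every edge-cut has at least `k` edges. -/
def EdgeConnected (G : Multigraph V E) (k : ℕ) : Prop :=
  ∀ A : Finset V, A.Nonempty → A ≠ univ → k ≤ (G.cut A).card

/-- A boundary function: values in `ℤ₃` summing to `0`. -/
def IsBoundary (β : V → ZMod 3) : Prop := ∑ v, β v = 0

/-- `D` is a `β`-orientation: `d⁺(v) - d⁻(v) ≡ β v (mod 3)` at every vertex. -/
def IsBetaOrientation (G : Multigraph V E) (β : V → ZMod 3) (D : E → Bool) : Prop :=
  ∀ v : V, ((G.outDeg D v - G.inDeg D v : ℤ) : ZMod 3) = β v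

/-- A mod 3-orientation: `d⁺(v) ≡ d⁻(v) (mod 3)` at every vertex. -/
def IsMod3Orientation (G : Multigraph V E) (D : E → Bool) : Prop :=
  ∀ v : V, ((G.outDeg D v - G.inDeg D v : ℤ) : ZMod 3) = 0

/-- `G` admits a mod 3-orientation (equivalently, a nowhere-zero 3-flow). -/
def Mod3Orientable (G : Multigraph V E) : Prop := ∃ D, G.IsMod3Orientation D

/-- `G` is `ℤ₃`-connected. -/
def Z3Connected (G : Multigraph V E) : Prop :=
  ∀ β : V → ZMod 3, IsBoundary β → ∃ D, G.IsBetaOrientation β D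

/-- `G` is `ℤ₃`-extendable at `x`: every pre-orientation of the edges at `x`
compatible with `β x` extends to a `β`-orientation of `G`. -/
def Z3ExtendableAt (G : Multigraph V E) (x : V) : Prop :=
  ∀ β : V → ZMod 3, IsBoundary β →
    ∀ D₀ : E → Bool, ((G.outDeg D₀ x - G.inDeg D₀ x : ℤ) : ZMod 3) = β x →
      ∃ D : E → Bool, (∀ e, G.Incident x e → D e = D₀ e) ∧ G.IsBetaOrientation β D

/-- `G` is mod-3-extendable at `x`: every pre-orientation of `∂(x)` with
`d⁺(x) ≡ d⁻(x) (mod 3)` extends to a mod 3-orientation of `G`. -/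
def Mod3ExtendableAt (G : Multigraph V E) (x : V) : Prop :=
  ∀ D₀ : E → Bool, ((G.outDeg D₀ x - G.inDeg D₀ x : ℤ) : ZMod 3) = 0 →
    ∃ D : E → Bool, (∀ e, G.Incident x e → D e = D₀ e) ∧ G.IsMod3Orientation D

/-- `A` is a `k`-critical-set: `d(A) ≤ k` but every nonempty proper subset has
larger boundary. -/
def CriticalSet (G : Multigraph V E) (k : ℕ) (A : Finset V) : Prop :=
  A.Nonempty ∧ A ≠ univ ∧ (G.cut A).card ≤ k ∧
    ∀ B : Finset V, B.Nonempty → B ⊂ A → k < (G.cut B).card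

/-- The set of edge-cuts of size exactly `k` (as sets of edges). -/
def kCuts (G : Multigraph V E) (k : ℕ) : Finset (Finset E) :=
  ((univ : Finset (Finset V)).filter
    fun A => A.Nonempty ∧ A ≠ univ ∧ (G.cut A).card = k).image G.cut


set_option linter.unusedSectionVars false

/-- Indicator. -/
def ind (A : Finset V) (v : V) : ℤ := if v ∈ A then 1 else 0

/-- Signed boundary of an edge with respect to a set. -/
def dl (f s : E → V) (A : Finset V) (e : E) : ℤ := ind A (f e) - ind A (s e)

/-- Size of the edge cut. -/
def dd (F : Finset E) (f s : E → V) (A : Finset V) : ℤ := ∑ e ∈ F, |dl f s A e|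

/-- Cyclic norm modulo 6. -/
def nrm (x : ℤ) : ℤ := min (x % 6) ((-x) % 6)

/-- Existence of the orientation. -/
def Solv (W : Finset V) (F : Finset E) (f s : E → V) (t : V → ℤ) : Prop :=
  ∃ σ : E → ℤ, (∀ e, σ e = 1 ∨ σ e = -1) ∧
    ∀ v ∈ W, (6 : ℤ) ∣ ∑ e ∈ F, σ e * dl f s {v} e - t v

/-- The hypotheses of the inductive statement. -/
structure Good (W : Finset V) (F : Finset E) (f s : E → V) (t o i : V → ℤ) : Prop where
  ends : ∀ e ∈ F, f e ∈ W ∧ s e ∈ W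
  par : ∀ v ∈ W, (2 : ℤ) ∣ t v - ∑ e ∈ F, dl f s {v} e
  tot : (6 : ℤ) ∣ ∑ v ∈ W, t v
  o0 : ∀ v, 0 ≤ o v
  i0 : ∀ v, 0 ≤ i v
  cap : (∑ v ∈ W, o v ≤ 5 ∧ ∑ v ∈ W, i v ≤ 2) ∨ (∑ v ∈ W, o v ≤ 2 ∧ ∑ v ∈ W, i v ≤ 5)
  val : ∀ A ⊆ W, A.Nonempty → A ≠ W →
    4 + nrm (∑ v ∈ A, t v + ∑ v ∈ A, i v - ∑ v ∈ A, o v) ≤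
      dd F f s A + ∑ v ∈ A, o v + ∑ v ∈ A, i v

theorem ind_sum (A : Finset V) (v : V) : ind A v = ∑ u ∈ A, ind {u} v := by
  simp [ind]

theorem dl_sum (f s : E → V) (A : Finset V) (e : E) : dl f s A e = ∑ u ∈ A, dl f s {u} e := by
  simp only [dl]
  rw [Finset.sum_sub_distrib, ← ind_sum, ← ind_sum]

theorem net_sum (F : Finset E) (c : E → ℤ) (f s : E → V) (A : Finset V) :
    ∑ e ∈ F, c e * dl f s A e = ∑ v ∈ A, ∑ e ∈ F, c e * dl f s {v} e := by
  rw [Finset.sum_comm]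
  refine Finset.sum_congr rfl fun e _ => ?_
  rw [dl_sum, Finset.mul_sum]

theorem net_sum1 (F : Finset E) (f s : E → V) (A : Finset V) :
    ∑ e ∈ F, dl f s A e = ∑ v ∈ A, ∑ e ∈ F, dl f s {v} e := by
  simpa using net_sum F (fun _ => 1) f s A

theorem dd_par (F : Finset E) (f s : E → V) (A : Finset V) :
    (2 : ℤ) ∣ dd F f s A - ∑ e ∈ F, dl f s A e := by
  rw [dd, ← Finset.sum_sub_distrib]
  refine Finset.dvd_sum fun e _ => ?_
  rcases abs_cases (dl f s A e) with h | h <;> omega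

theorem Good.parA {W : Finset V} {F : Finset E} {f s : E → V} {t o i : V → ℤ}
    (h : Good W F f s t o i) {A : Finset V} (hA : A ⊆ W) : (2 : ℤ) ∣ ∑ v ∈ A, t v - dd F f s A := by
  have h1 := dd_par F f s A
  have h2 : (2 : ℤ) ∣ ∑ v ∈ A, t v - ∑ e ∈ F, dl f s A e := by
    rw [net_sum1, ← Finset.sum_sub_distrib]
    exact Finset.dvd_sum fun v hv => h.par v (hA hv)
  omega

theorem dd_nonneg (F : Finset E) (f s : E → V) (A : Finset V) : 0 ≤ dd F f s A :=
  Finset.sum_nonneg fun _ _ => abs_nonneg _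

theorem dl_sdiff {W A : Finset V} {f s : E → V} {e : E}
    (h : f e ∈ W ∧ s e ∈ W) : dl f s (W \ A) e = - dl f s A e := by
  simp only [dl, ind, mem_sdiff, h, true_and]
  split_ifs <;> simp_all

theorem dd_sdiff {W A : Finset V} {F : Finset E} {f s : E → V}
    (h : ∀ e ∈ F, f e ∈ W ∧ s e ∈ W) : dd F f s (W \ A) = dd F f s A := by
  refine Finset.sum_congr rfl fun e he => ?_
  rw [dl_sdiff (h e he), abs_neg]

theorem nrm_bd (x : ℤ) : 0 ≤ nrm x ∧ nrm x ≤ 3 := by unfold nrm; omega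

theorem Solv.neg {W : Finset V} {F : Finset E} {f s : E → V} {t : V → ℤ}
    (h : Solv W F f s (fun v => - t v)) : Solv W F f s t := by
  obtain ⟨σ, h1, h2⟩ := h
  refine ⟨fun e => - σ e, fun e => ?_, fun v hv => ?_⟩
  · have := h1 e; show - σ e = 1 ∨ - σ e = -1; omega
  · have : (6 : ℤ) ∣ ∑ e ∈ F, σ e * dl f s {v} e - - t v := h2 v hv
    simp only [neg_mul, Finset.sum_neg_distrib]
    omega

theorem Good.neg {W : Finset V} {F : Finset E} {f s : E → V} {t o i : V → ℤ}
    (h : Good W F f s t o i) : Good W F f s (fun v => - t v) i o where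
  ends := h.ends
  par v hv := by have := h.par v hv; omega
  tot := by have := h.tot; rw [Finset.sum_neg_distrib]; omega
  o0 := h.i0
  i0 := h.o0
  cap := by have := h.cap; omega
  val A h1 h2 h3 := by
    have := h.val A h1 h2 h3
    rw [Finset.sum_neg_distrib]
    unfold nrm at *; omega

/-- Total degree identity. -/
theorem Good.conn {W : Finset V} {F : Finset E} {f s : E → V} {t o i : V → ℤ}
    (h : Good W F f s t o i) {A : Finset V} (hA : A ⊆ W) (h1 : A.Nonempty) (h2 : A ≠ W) :
    1 ≤ dd F f s A := by
  have a := h.val A hA h1 h2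
  have hne : (W \ A).Nonempty := by
    rw [Finset.sdiff_nonempty]; intro h'; exact h2 (Finset.Subset.antisymm hA h')
  have b := h.val (W \ A) Finset.sdiff_subset hne (by
    intro h'
    obtain ⟨x, hx⟩ := h1
    have : x ∈ W \ A := by rw [h']; exact hA hx
    simp at this; exact this.2 hx)
  rw [dd_sdiff h.ends] at b
  have c1 := Finset.sum_sdiff (f := o) hA
  have c2 := Finset.sum_sdiff (f := i) hA
  have := h.cap
  have n1 := nrm_bd (∑ v ∈ A, t v + ∑ v ∈ A, i v - ∑ v ∈ A, o v)
  have n2 := nrm_bd (∑ v ∈ W \ A, t v + ∑ v ∈ W \ A, i v - ∑ v ∈ W \ A, o v)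
  omega

/-- Contraction along an arbitrary map. -/
theorem Good.contract {W : Finset V} {F : Finset E} {f s : E → V} {t o i : V → ℤ}
    (h : Good W F f s t o i) (c : V → V) :
    Good (W.image c) F (c ∘ f) (c ∘ s) (fun u => ∑ w ∈ W with c w = u, t w)
      (fun u => ∑ w ∈ W with c w = u, o w) (fun u => ∑ w ∈ W with c w = u, i w) := by
  have key : ∀ (A : Finset V) (g : V → ℤ),
      ∑ u ∈ A, ∑ w ∈ W with c w = u, g w = ∑ w ∈ W with c w ∈ A, g w := by
    intro A g
    rw [← Finset.sum_fiberwise_of_maps_to (s := W.filter (fun w => c w ∈ A)) (t := A) (g := c)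
      (by simp)]
    refine Finset.sum_congr rfl fun u hu => ?_
    refine Finset.sum_congr ?_ fun _ _ => rfl
    ext w; simp only [mem_filter]; constructor
    · rintro ⟨a, rfl⟩; exact ⟨⟨a, hu⟩, rfl⟩
    · rintro ⟨⟨a, _⟩, b⟩; exact ⟨a, b⟩
  have keyd : ∀ A : Finset V, ∀ e ∈ F, dl (c ∘ f) (c ∘ s) A e = dl f s (W.filter (fun w => c w ∈ A)) e := by
    intro A e he
    have := h.ends e he
    simp [dl, ind, this]
  have keydd : ∀ A : Finset V, dd F (c ∘ f) (c ∘ s) A = dd F f s (W.filter (fun w => c w ∈ A)) := by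
    intro A
    refine Finset.sum_congr rfl fun e he => ?_
    rw [keyd A e he]
  have keyW : W.filter (fun w => c w ∈ W.image c) = W := by
    rw [Finset.filter_eq_self]; intro w hw; exact Finset.mem_image_of_mem c hw
  refine ⟨?_, ?_, ?_, ?_, ?_, ?_, ?_⟩
  · intro e he
    exact ⟨Finset.mem_image_of_mem c (h.ends e he).1, Finset.mem_image_of_mem c (h.ends e he).2⟩
  · intro v hv
    have h1 := dd_par F f s (W.filter (fun w => c w = v))
    have h2 := h.parA (Finset.filter_subset (fun w => c w = v) W)
    have h3 : ∑ e ∈ F, dl (c ∘ f) (c ∘ s) {v} e = ∑ e ∈ F, dl f s (W.filter (fun w => c w = v)) e := by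
      refine Finset.sum_congr rfl fun e he => ?_
      rw [keyd _ e he]; simp
    rw [h3]; omega
  · rw [key, keyW]; exact h.tot
  · intro v; exact Finset.sum_nonneg fun _ _ => h.o0 _
  · intro v; exact Finset.sum_nonneg fun _ _ => h.i0 _
  · rw [key, key, keyW]; exact h.cap
  · intro A h1 h2 h3
    rw [key, key, key, keydd]
    apply h.val _ (Finset.filter_subset _ _)
    · obtain ⟨x, hx⟩ := h2
      obtain ⟨w, hw, rfl⟩ := Finset.mem_image.1 (h1 hx)
      exact ⟨w, by simp [hw, hx]⟩
    · intro h4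
      apply h3
      apply Finset.Subset.antisymm h1
      intro x hx
      obtain ⟨w, hw, rfl⟩ := Finset.mem_image.1 hx
      rw [← h4] at hw
      exact (Finset.mem_filter.1 hw).2

/-- Reduction along a tight nontrivial set. -/
theorem claim1 {W : Finset V} {F : Finset E} {f s : E → V} {t o i : V → ℤ}
    (h : Good W F f s t o i)
    (IH : ∀ (W' : Finset V) (F' : Finset E) (f' s' : E → V) (t' o' i' : V → ℤ),
      W'.card < W.card → Good W' F' f' s' t' o' i' → Solv W' F' f' s' t')
    {A : Finset V} (hA : A ⊆ W) (hne : A ≠ W) (h2 : 2 ≤ A.card)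
    (ht : dd F f s A + ∑ v ∈ A, o v + ∑ v ∈ A, i v ≤
      4 + nrm (∑ v ∈ A, t v + ∑ v ∈ A, i v - ∑ v ∈ A, o v)) : Solv W F f s t := by
  obtain ⟨a, ha⟩ : A.Nonempty := by rw [← Finset.card_pos]; omega
  have hAW : A ⊂ W := Finset.ssubset_iff_subset_ne.2 ⟨hA, hne⟩
  set c : V → V := fun u => if u ∈ A then a else u with hc
  have hcard : (W.image c).card < W.card := by
    have : W.image c ⊆ insert a (W \ A) := by
      intro x hx
      obtain ⟨w, hw, rfl⟩ := Finset.mem_image.1 hx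
      simp only [hc]
      split_ifs with h' <;> simp [h', hw]
    have h3 := Finset.card_le_card this
    have h4 := Finset.card_insert_le a (W \ A)
    have h5 := Finset.card_sdiff_add_card_eq_card hA
    omega
  obtain ⟨σ1, hs1, hn1⟩ := IH _ _ _ _ _ _ _ hcard (h.contract c)
  have hend := h.ends
  -- outside vertices
  have hout : ∀ u ∈ W, u ∉ A → (6 : ℤ) ∣ ∑ e ∈ F, σ1 e * dl f s {u} e - t u := by
    intro u hu huA
    have h3 := hn1 u (by
      refine Finset.mem_image.2 ⟨u, hu, ?_⟩
      simp [hc, huA])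
    have hcu : ∀ w, c w = u ↔ w = u := by
      intro w
      simp only [hc]
      split_ifs with h'
      · constructor
        · rintro rfl; exact absurd ha huA
        · rintro rfl; exact absurd h' huA
      · rfl
    have h4 : ∑ w ∈ W with c w = u, t w = t u := by
      simp only [hcu]
      rw [Finset.filter_eq' W u]; simp [hu]
    have h5 : ∀ e, dl (c ∘ f) (c ∘ s) {u} e = dl f s {u} e := by
      intro e; simp [dl, ind, hcu]
    simp only [h5, h4] at h3
    exact h3
  have hin : (6 : ℤ) ∣ ∑ e ∈ F, σ1 e * dl f s A e - ∑ v ∈ A, t v := by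
    have h3 := hn1 a (by
      refine Finset.mem_image.2 ⟨a, hA ha, ?_⟩
      simp [hc, ha])
    have hcu : ∀ w, c w = a ↔ w ∈ A := by
      intro w
      simp only [hc]
      split_ifs with h'
      · simp [h']
      · simp only [h', iff_false]; rintro rfl; exact h' ha
    have h4 : ∑ w ∈ W with c w = a, t w = ∑ v ∈ A, t v := by
      simp only [hcu]
      refine Finset.sum_congr ?_ fun _ _ => rfl
      ext w; simp only [mem_filter]; exact ⟨fun h => h.2, fun h => ⟨hA h, h⟩⟩
    have h5 : ∀ e, dl (c ∘ f) (c ∘ s) {a} e = dl f s A e := by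
      intro e; simp [dl, ind, hcu]
    simp only [h5, h4] at h3
    exact h3
  -- inside
  set p : E → Prop := fun e => f e ∈ A ∧ s e ∈ A with hp
  set F2 := F.filter p with hF2
  set F3 := F.filter (fun e => ¬ p e) with hF3
  have split : ∀ g : E → ℤ, ∑ e ∈ F2, g e + ∑ e ∈ F3, g e = ∑ e ∈ F, g e := fun g =>
    Finset.sum_filter_add_sum_filter_not F p g
  set o2 : V → ℤ := fun u => o u + ∑ e ∈ F3, max (-(σ1 e * dl f s {u} e)) 0 with ho2
  set i2 : V → ℤ := fun u => i u + ∑ e ∈ F3, max (σ1 e * dl f s {u} e) 0 with hi2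
  set t2 : V → ℤ := fun u => t u - ∑ e ∈ F3, σ1 e * dl f s {u} e with ht2
  have hdiff : ∀ u, i2 u - o2 u + t2 u = i u - o u + t u := by
    intro u
    simp only [ho2, hi2, ht2]
    have : ∑ e ∈ F3, max (σ1 e * dl f s {u} e) 0 - ∑ e ∈ F3, max (-(σ1 e * dl f s {u} e)) 0
        = ∑ e ∈ F3, σ1 e * dl f s {u} e := by
      rw [← Finset.sum_sub_distrib]
      refine Finset.sum_congr rfl fun e _ => ?_
      generalize σ1 e * dl f s {u} e = z
      omega
    omega
  have hdiffB : ∀ B : Finset V, ∑ v ∈ B, t2 v + ∑ v ∈ B, i2 v - ∑ v ∈ B, o2 v =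
      ∑ v ∈ B, t v + ∑ v ∈ B, i v - ∑ v ∈ B, o v := by
    intro B
    rw [← Finset.sum_add_distrib, ← Finset.sum_sub_distrib, ← Finset.sum_add_distrib,
      ← Finset.sum_sub_distrib]
    refine Finset.sum_congr rfl fun u _ => ?_
    have := hdiff u; omega
  have habs : ∀ u, o2 u + i2 u = o u + i u + ∑ e ∈ F3, |dl f s {u} e| := by
    intro u
    simp only [ho2, hi2]
    have : ∑ e ∈ F3, max (σ1 e * dl f s {u} e) 0 + ∑ e ∈ F3, max (-(σ1 e * dl f s {u} e)) 0
        = ∑ e ∈ F3, |dl f s {u} e| := by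
      rw [← Finset.sum_add_distrib]
      refine Finset.sum_congr rfl fun e _ => ?_
      rcases hs1 e with h' | h' <;> rw [h'] <;> generalize dl f s {u} e = z <;>
        rcases abs_cases z with hz | hz <;> omega
    omega
  have hNB : ∀ B ⊆ A, dd F2 f s B + ∑ v ∈ B, o2 v + ∑ v ∈ B, i2 v =
      dd F f s B + ∑ v ∈ B, o v + ∑ v ∈ B, i v := by
    intro B hB
    have h3 : ∑ v ∈ B, o2 v + ∑ v ∈ B, i2 v =
        ∑ v ∈ B, o v + ∑ v ∈ B, i v + ∑ e ∈ F3, |dl f s B e| := by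
      have : ∑ e ∈ F3, |dl f s B e| = ∑ v ∈ B, ∑ e ∈ F3, |dl f s {v} e| := by
        rw [Finset.sum_comm]
        refine Finset.sum_congr rfl fun e he => ?_
        have hne : ¬ (f e ∈ A ∧ s e ∈ A) := (Finset.mem_filter.1 he).2
        by_cases hf : f e ∈ B
        · have hs : s e ∉ A := fun h' => hne ⟨hB hf, h'⟩
          have hs' : ∀ v ∈ B, ind {v} (s e) = 0 := by
            intro v hv; simp only [ind, mem_singleton]; rw [if_neg]; rintro rfl; exact hs (hB hv)
          have hs'' : ind B (s e) = 0 := by simp only [ind]; rw [if_neg]; exact fun h' => hs (hB h')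
          have : ∑ v ∈ B, |dl f s {v} e| = ∑ v ∈ B, ind {v} (f e) := by
            refine Finset.sum_congr rfl fun v hv => ?_
            rw [dl, hs' v hv, sub_zero]; unfold ind; split_ifs <;> simp
          rw [this, ← ind_sum]
          rw [dl, hs'', sub_zero]; simp [ind, hf]
        · have hf' : ∀ v ∈ B, ind {v} (f e) = 0 := by
            intro v hv; simp only [ind, mem_singleton]; rw [if_neg]; rintro rfl; exact hf hv
          have hf'' : ind B (f e) = 0 := by simp [ind, hf]
          have : ∑ v ∈ B, |dl f s {v} e| = ∑ v ∈ B, ind {v} (s e) := by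
            refine Finset.sum_congr rfl fun v hv => ?_
            rw [dl, hf' v hv, zero_sub, abs_neg]; unfold ind; split_ifs <;> simp
          rw [this, ← ind_sum]
          rw [dl, hf'', zero_sub, abs_neg]; unfold ind; split_ifs <;> simp
      rw [this, ← Finset.sum_add_distrib, ← Finset.sum_add_distrib, ← Finset.sum_add_distrib]
      refine Finset.sum_congr rfl fun v _ => ?_
      exact habs v
    have h4 := split (fun e => |dl f s B e|)
    simp only [dd]
    omega
  have hdA : dd F2 f s A = 0 := by
    refine Finset.sum_eq_zero fun e he => ?_
    have : f e ∈ A ∧ s e ∈ A := (Finset.mem_filter.1 he).2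
    simp [dl, ind, this]
  have hnetA : ∑ e ∈ F, σ1 e * dl f s A e = ∑ v ∈ A, ∑ e ∈ F3, σ1 e * dl f s {v} e := by
    rw [← net_sum, ← split]
    rw [add_eq_right]
    refine Finset.sum_eq_zero fun e he => ?_
    have : f e ∈ A ∧ s e ∈ A := (Finset.mem_filter.1 he).2
    simp [dl, ind, this]
  have htot : (6 : ℤ) ∣ ∑ v ∈ A, t2 v := by
    simp only [ht2, Finset.sum_sub_distrib]
    rw [← hnetA]; omega
  have ho2n : ∀ v, 0 ≤ o2 v := fun v =>
    add_nonneg (h.o0 v) (Finset.sum_nonneg fun _ _ => le_max_right _ _)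
  have hi2n : ∀ v, 0 ≤ i2 v := fun v =>
    add_nonneg (h.i0 v) (Finset.sum_nonneg fun _ _ => le_max_right _ _)
  have hgood : Good A F2 f s t2 o2 i2 := by
    refine ⟨fun e he => (Finset.mem_filter.1 he).2, ?_, htot, ho2n, hi2n, ?_, ?_⟩
    · intro v hv
      have h3 := h.par v (hA hv)
      have h4 := split (fun e => dl f s {v} e)
      have h5 : (2 : ℤ) ∣ ∑ e ∈ F3, dl f s {v} e - ∑ e ∈ F3, σ1 e * dl f s {v} e := by
        rw [← Finset.sum_sub_distrib]
        refine Finset.dvd_sum fun e _ => ?_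
        rcases hs1 e with h' | h' <;> rw [h'] <;> omega
      simp only [ht2]
      omega
    · have h3 := hNB A (Finset.Subset.refl A)
      have h4 := hdiffB A
      have h5 : 0 ≤ ∑ v ∈ A, o2 v := Finset.sum_nonneg fun v _ => ho2n v
      have h6 : 0 ≤ ∑ v ∈ A, i2 v := Finset.sum_nonneg fun v _ => hi2n v
      rw [← h4] at ht
      rw [← h3, hdA] at ht
      clear h3 h4
      generalize ∑ v ∈ A, o2 v = x at *
      generalize ∑ v ∈ A, i2 v = y at *
      generalize ∑ v ∈ A, t2 v = z at *
      unfold nrm at ht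
      omega
    · intro B hB hBn hBA
      rw [hdiffB, hNB B hB]
      refine h.val B (hB.trans hA) hBn ?_
      rintro rfl
      exact hne (Finset.Subset.antisymm hA hB)
  obtain ⟨σ2, hs2, hn2⟩ := IH _ _ _ _ _ _ _ (Finset.card_lt_card hAW) hgood
  refine ⟨fun e => if p e then σ2 e else σ1 e, fun e => ?_, fun v hv => ?_⟩
  · by_cases h' : p e
    · simp only [h', if_true]; exact hs2 e
    · simp only [h', if_false]; exact hs1 e
  · rw [← split]
    have e1 : ∑ e ∈ F2, (if p e then σ2 e else σ1 e) * dl f s {v} e =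
        ∑ e ∈ F2, σ2 e * dl f s {v} e := by
      refine Finset.sum_congr rfl fun e he => ?_
      rw [if_pos (Finset.mem_filter.1 he).2]
    have e2 : ∑ e ∈ F3, (if p e then σ2 e else σ1 e) * dl f s {v} e =
        ∑ e ∈ F3, σ1 e * dl f s {v} e := by
      refine Finset.sum_congr rfl fun e he => ?_
      rw [if_neg (Finset.mem_filter.1 he).2]
    rw [e1, e2]
    by_cases hvA : v ∈ A
    · have := hn2 v hvA
      simp only [ht2] at this
      omega
    · have z : ∀ g : E → ℤ, ∑ e ∈ F2, g e * dl f s {v} e = 0 := by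
        intro g
        refine Finset.sum_eq_zero fun e he => ?_
        have h3 : f e ∈ A ∧ s e ∈ A := (Finset.mem_filter.1 he).2
        have h4 : f e ≠ v := by rintro rfl; exact hvA h3.1
        have h5 : s e ≠ v := by rintro rfl; exact hvA h3.2
        simp [dl, ind, h4, h5]
      have h3 := hout v hv hvA
      rw [← split, z] at h3
      rw [z]; exact h3

theorem dl_cases (f s : E → V) (A : Finset V) (e : E) :
    dl f s A e = 0 ∨ dl f s A e = 1 ∨ dl f s A e = -1 := by
  unfold dl ind; split_ifs <;> simp

theorem ind_cases (A : Finset V) (v : V) : ind A v = 0 ∨ ind A v = 1 := by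
  unfold ind; split_ifs <;> simp

theorem ind_self (v : V) : ind {v} v = 1 := by simp [ind]

theorem ind_ne {u v : V} (h : v ≠ u) : ind {u} v = 0 := by simp [ind, h]

/-- Deleting an edge with a prescribed direction. -/
theorem Solv.del {W : Finset V} {F : Finset E} {f s : E → V} {t : V → ℤ} {e : E} (he : e ∈ F)
    {ε : ℤ} (hε : ε = 1 ∨ ε = -1)
    (h : Solv W (F.erase e) f s (fun v => t v - ε * dl f s {v} e)) : Solv W F f s t := by
  obtain ⟨σ, h1, h2⟩ := h
  refine ⟨Function.update σ e ε, fun e' => ?_, fun v hv => ?_⟩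
  · by_cases h' : e' = e
    · subst h'; simpa using hε
    · simpa [h'] using h1 e'
  · have h3 := h2 v hv
    rw [← Finset.add_sum_erase F _ he]
    have : ∑ x ∈ F.erase e, Function.update σ e ε x * dl f s {v} x =
        ∑ x ∈ F.erase e, σ x * dl f s {v} x := by
      refine Finset.sum_congr rfl fun x hx => ?_
      rw [Function.update_of_ne (Finset.ne_of_mem_erase hx)]
    rw [this, Function.update_self]
    simp only at h3
    omega

/-- The part of the hypotheses without the cut conditions. -/
structure Base (W : Finset V) (F : Finset E) (f s : E → V) (t : V → ℤ) : Prop where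
  ends : ∀ e ∈ F, f e ∈ W ∧ s e ∈ W
  par : ∀ v ∈ W, (2 : ℤ) ∣ t v - ∑ e ∈ F, dl f s {v} e
  tot : (6 : ℤ) ∣ ∑ v ∈ W, t v

theorem Good.base {W : Finset V} {F : Finset E} {f s : E → V} {t o i : V → ℤ}
    (h : Good W F f s t o i) : Base W F f s t := ⟨h.ends, h.par, h.tot⟩

theorem Base.del {W : Finset V} {F : Finset E} {f s : E → V} {t : V → ℤ} {e : E} (he : e ∈ F)
    {ε : ℤ} (hε : ε = 1 ∨ ε = -1) (h : Base W F f s t) :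
    Base W (F.erase e) f s (fun v => t v - ε * dl f s {v} e) := by
  refine ⟨fun e' he' => h.ends e' (Finset.mem_of_mem_erase he'), fun v hv => ?_, ?_⟩
  · have h3 := h.par v hv
    rw [← Finset.add_sum_erase F _ he] at h3
    rcases hε with rfl | rfl <;> omega
  · rw [Finset.sum_sub_distrib, ← Finset.mul_sum, ← dl_sum]
    have : dl f s W e = 0 := by simp [dl, ind, h.ends e he]
    rw [this]; simpa using h.tot

theorem dd_del {F : Finset E} {f s : E → V} {e : E} (he : e ∈ F) (A : Finset V) :
    dd (F.erase e) f s A = dd F f s A - |dl f s A e| := by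
  have := Finset.add_sum_erase F (fun e => |dl f s A e|) he
  simp only [dd] at *
  omega

theorem sum_del (A : Finset V) (f s : E → V) (t : V → ℤ) (ε : ℤ) (e : E) :
    ∑ v ∈ A, (t v - ε * dl f s {v} e) = ∑ v ∈ A, t v - ε * dl f s A e := by
  rw [Finset.sum_sub_distrib, ← Finset.mul_sum, ← dl_sum]

/-- The other end of an edge at `v`. -/
def oth (f s : E → V) (v : V) (e : E) : V := if f e = v then s e else f e

theorem oth_spec {f s : E → V} {v : V} {e : E} (h : dl f s {v} e ≠ 0) :
    (dl f s {v} e = 1 ∨ dl f s {v} e = -1) ∧ oth f s v e ≠ v ∧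
      (∀ A, dl f s A e = dl f s {v} e * (ind A v - ind A (oth f s v e))) ∧
      (f e = oth f s v e ∨ s e = oth f s v e) := by
  by_cases h1 : f e = v <;> by_cases h2 : s e = v
  · simp [dl, h1, h2] at h
  · subst h1
    have h3 : dl f s {f e} e = 1 := by simp [dl, ind, h2]
    rw [h3]
    refine ⟨Or.inl rfl, by simpa [oth] using h2, fun A => by simp [dl, oth], by simp [oth]⟩
  · subst h2
    have h3 : dl f s {s e} e = -1 := by simp [dl, ind, h1]
    rw [h3]
    refine ⟨Or.inr rfl, by simpa [oth] using h1, fun A => by simp [dl, oth, h1], by simp [oth, h1]⟩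
  · simp [dl, ind, h1, h2] at h

theorem sum_two {F : Finset E} {e1 e2 : E} (h1 : e1 ∈ F) (h2 : e2 ∈ F) (h : e1 ≠ e2) (g : E → ℤ) :
    ∑ e ∈ F, g e = g e1 + g e2 + ∑ e ∈ (F.erase e2).erase e1, g e := by
  rw [← Finset.add_sum_erase F g h2,
    ← Finset.add_sum_erase (F.erase e2) g (Finset.mem_erase.2 ⟨h, h1⟩)]
  ring

theorem dl_update {f s : E → V} {e1 : E} {a b : V} (A : Finset V) {e : E} (h : e ≠ e1) :
    dl (Function.update f e1 a) (Function.update s e1 b) A e = dl f s A e := by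
  simp [dl, h]

theorem dl_update_self {f s : E → V} {e1 : E} {a b : V} (A : Finset V) :
    dl (Function.update f e1 a) (Function.update s e1 b) A e1 = ind A a - ind A b := by
  simp [dl]

section lift
variable {W : Finset V} {F : Finset E} {f s : E → V} {t : V → ℤ} {e1 e2 : E} {v : V}
  (h1 : e1 ∈ F) (h2 : e2 ∈ F) (h12 : e1 ≠ e2)
  (d1 : dl f s {v} e1 ≠ 0) (d2 : dl f s {v} e2 ≠ 0)

theorem Solv.lift (h1 : e1 ∈ F) (h2 : e2 ∈ F) (h12 : e1 ≠ e2)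
    (d1 : dl f s {v} e1 ≠ 0) (d2 : dl f s {v} e2 ≠ 0)
    (h : Solv W (F.erase e2) (Function.update f e1 (oth f s v e1))
      (Function.update s e1 (oth f s v e2)) t) : Solv W F f s t := by
  obtain ⟨σ, hs, hn⟩ := h
  obtain ⟨p1, -, q1, -⟩ := oth_spec d1
  obtain ⟨p2, -, q2, -⟩ := oth_spec d2
  refine ⟨Function.update (Function.update σ e1 (-σ e1 * dl f s {v} e1)) e2
    (σ e1 * dl f s {v} e2), fun e => ?_, fun u hu => ?_⟩
  · by_cases a2 : e = e2
    · subst a2; rw [Function.update_self]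
      rcases hs e1 with h | h <;> rcases p2 with h' | h' <;> simp [h, h']
    · rw [Function.update_of_ne a2]
      by_cases a1 : e = e1
      · subst a1; rw [Function.update_self]
        rcases hs e with h | h <;> rcases p1 with h' | h' <;> simp [h, h']
      · rw [Function.update_of_ne a1]; exact hs e
  · have h3 := hn u hu
    rw [← Finset.add_sum_erase (F.erase e2) _ (Finset.mem_erase.2 ⟨h12, h1⟩), dl_update_self] at h3
    rw [sum_two h1 h2 h12]
    have c1 : ∑ e ∈ (F.erase e2).erase e1,
        (Function.update (Function.update σ e1 (-σ e1 * dl f s {v} e1)) e2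
          (σ e1 * dl f s {v} e2)) e * dl f s {u} e =
        ∑ e ∈ (F.erase e2).erase e1, σ e * dl (Function.update f e1 (oth f s v e1))
          (Function.update s e1 (oth f s v e2)) {u} e := by
      refine Finset.sum_congr rfl fun e he => ?_
      simp only [mem_erase] at he
      rw [dl_update _ he.1, Function.update_of_ne he.2.1, Function.update_of_ne he.1]
    rw [c1, Function.update_self, Function.update_of_ne h12, Function.update_self,
      q1 {u}, q2 {u}]
    have c2 : -σ e1 * dl f s {v} e1 * (dl f s {v} e1 * (ind {u} v - ind {u} (oth f s v e1))) +
        σ e1 * dl f s {v} e2 * (dl f s {v} e2 * (ind {u} v - ind {u} (oth f s v e2))) =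
        σ e1 * (ind {u} (oth f s v e1) - ind {u} (oth f s v e2)) := by
      rcases p1 with h | h <;> rcases p2 with h' | h' <;> rw [h, h'] <;> ring
    rw [c2]; exact h3

theorem Base.lift (h1 : e1 ∈ F) (h2 : e2 ∈ F) (h12 : e1 ≠ e2)
    (d1 : dl f s {v} e1 ≠ 0) (d2 : dl f s {v} e2 ≠ 0) (h : Base W F f s t) :
    Base W (F.erase e2) (Function.update f e1 (oth f s v e1))
      (Function.update s e1 (oth f s v e2)) t := by
  obtain ⟨p1, -, q1, r1⟩ := oth_spec d1
  obtain ⟨p2, -, q2, r2⟩ := oth_spec d2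
  have w1 : oth f s v e1 ∈ W := by
    have := h.ends e1 h1
    rcases r1 with h' | h' <;> rw [← h'] <;> tauto
  have w2 : oth f s v e2 ∈ W := by
    have := h.ends e2 h2
    rcases r2 with h' | h' <;> rw [← h'] <;> tauto
  refine ⟨fun e he => ?_, fun u hu => ?_, h.tot⟩
  · by_cases a : e = e1
    · subst a; simp [w1, w2]
    · simpa [a] using h.ends e (Finset.mem_of_mem_erase he)
  · have h3 := h.par u hu
    rw [sum_two h1 h2 h12] at h3
    rw [← Finset.add_sum_erase (F.erase e2) _ (Finset.mem_erase.2 ⟨h12, h1⟩), dl_update_self]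
    have c1 : ∑ e ∈ (F.erase e2).erase e1, dl f s {u} e =
        ∑ e ∈ (F.erase e2).erase e1, dl (Function.update f e1 (oth f s v e1))
          (Function.update s e1 (oth f s v e2)) {u} e := by
      refine Finset.sum_congr rfl fun e he => ?_
      simp only [mem_erase] at he
      rw [dl_update _ he.1]
    rw [← c1]
    rw [q1 {u}, q2 {u}] at h3
    rcases p1 with h | h <;> rcases p2 with h' | h' <;> rw [h, h'] at h3 <;> omega

theorem dd_lift (h1 : e1 ∈ F) (h2 : e2 ∈ F) (h12 : e1 ≠ e2)
    (d1 : dl f s {v} e1 ≠ 0) (d2 : dl f s {v} e2 ≠ 0) {A : Finset V} (hA : v ∉ A) :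
    dd (F.erase e2) (Function.update f e1 (oth f s v e1)) (Function.update s e1 (oth f s v e2)) A =
      dd F f s A - 2 * (ind A (oth f s v e1) * ind A (oth f s v e2)) := by
  obtain ⟨p1, -, q1, r1⟩ := oth_spec d1
  obtain ⟨p2, -, q2, r2⟩ := oth_spec d2
  have c1 : ∑ e ∈ (F.erase e2).erase e1, |dl f s A e| =
        ∑ e ∈ (F.erase e2).erase e1, |dl (Function.update f e1 (oth f s v e1))
          (Function.update s e1 (oth f s v e2)) A e| := by
    refine Finset.sum_congr rfl fun e he => ?_
    simp only [mem_erase] at he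
    rw [dl_update _ he.1]
  rw [dd, ← Finset.add_sum_erase (F.erase e2) _ (Finset.mem_erase.2 ⟨h12, h1⟩), dl_update_self,
    ← c1, dd, sum_two h1 h2 h12, q1 A, q2 A]
  have hv : ind A v = 0 := by simp [ind, hA]
  rw [hv]
  rcases p1 with h | h <;> rcases p2 with h' | h' <;> rw [h, h'] <;>
    rcases ind_cases A (oth f s v e1) with k | k <;>
    rcases ind_cases A (oth f s v e2) with k' | k' <;> rw [k, k'] <;> norm_num <;> ring

end lift

theorem Solv.remove {W : Finset V} {F : Finset E} {f s : E → V} {t : V → ℤ} {v : V}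
    (hz : ∀ e ∈ F, dl f s {v} e = 0) (ht : (6 : ℤ) ∣ t v)
    (h : Solv (W.erase v) (F.filter fun e => f e ≠ v) f s t) : Solv W F f s t := by
  obtain ⟨σ, hs, hn⟩ := h
  refine ⟨σ, hs, fun u hu => ?_⟩
  by_cases huv : u = v
  · subst huv
    have : ∑ e ∈ F, σ e * dl f s {u} e = 0 :=
      Finset.sum_eq_zero fun e he => by rw [hz e he, mul_zero]
    rw [this]; omega
  · have h3 := hn u (Finset.mem_erase.2 ⟨huv, hu⟩)
    rw [Finset.sum_filter_of_ne] at h3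
    · exact h3
    · intro e he hne hv
      apply hne
      have h4 := hz e he
      have h5 : s e = v := by
        by_contra h'
        simp [dl, ind, hv, h'] at h4
      simp [dl, hv, h5]

theorem Base.remove {W : Finset V} {F : Finset E} {f s : E → V} {t : V → ℤ} {v : V}
    (hv : v ∈ W)
    (hz : ∀ e ∈ F, dl f s {v} e = 0) (ht : (6 : ℤ) ∣ t v) (h : Base W F f s t) :
    Base (W.erase v) (F.filter fun e => f e ≠ v) f s t ∧
    ∀ A : Finset V, dd (F.filter fun e => f e ≠ v) f s A = dd F f s A := by
  have key : ∀ e ∈ F, (f e = v ↔ s e = v) := by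
    intro e he
    have h4 := hz e he
    by_cases a : f e = v <;> by_cases b : s e = v <;> simp [dl, ind, a, b] at h4 ⊢
  have key2 : ∀ e ∈ F, f e = v → ∀ A, dl f s A e = 0 := by
    intro e he h' A
    simp [dl, h', (key e he).1 h']
  refine ⟨⟨fun e he => ?_, fun u hu => ?_, ?_⟩, fun A => ?_⟩
  · rw [mem_filter] at he
    have := h.ends e he.1
    refine ⟨Finset.mem_erase.2 ⟨he.2, this.1⟩, Finset.mem_erase.2 ⟨fun h' => he.2 ((key e he.1).2 h'), this.2⟩⟩
  · rw [Finset.sum_filter_of_ne]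
    · exact h.par u (Finset.mem_of_mem_erase hu)
    · intro e he hne h'
      exact hne (key2 e he h' _)
  · have := Finset.add_sum_erase W t hv
    have := h.tot
    omega
  · rw [dd, dd, Finset.sum_filter_of_ne]
    intro e he hne h'
    apply hne
    rw [key2 e he h' A, abs_zero]

theorem dd_insert {F K : Finset E} {f s : E → V} {v : V} {A : Finset V} (hvA : v ∉ A)
    (hK : K ⊆ F) (hd : ∀ e ∈ K, dl f s {v} e ≠ 0) :
    dd F f s (insert v A) + 2 * ∑ e ∈ K, ind A (oth f s v e) ≤ dd F f s A + dd F f s {v} := by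
  have hk : ∑ e ∈ K, ind A (oth f s v e) = ∑ e ∈ F, if e ∈ K then ind A (oth f s v e) else 0 := by
    rw [← Finset.sum_filter]
    refine Finset.sum_congr ?_ fun _ _ => rfl
    ext e; simp only [mem_filter]; exact ⟨fun h => ⟨hK h, h⟩, fun h => h.2⟩
  rw [hk, dd, dd, dd, Finset.mul_sum, ← Finset.sum_add_distrib, ← Finset.sum_add_distrib]
  refine Finset.sum_le_sum fun e _ => ?_
  have hi : ∀ u, ind (insert v A) u = ind A u + ind {v} u := by
    intro u
    by_cases a : u = v
    · subst a; simp [ind, hvA]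
    · simp [ind, a]
  have hdl : dl f s (insert v A) e = dl f s A e + dl f s {v} e := by
    simp only [dl, hi]; ring
  split_ifs with h
  · obtain ⟨p, -, q, -⟩ := oth_spec (hd e h)
    rw [hdl, q A]
    have hv : ind A v = 0 := by simp [ind, hvA]
    rw [hv]
    rcases p with h | h <;> rw [h] <;>
      rcases ind_cases A (oth f s v e) with k | k <;> rw [k] <;> norm_num
  · rw [hdl]; simpa using abs_add_le (dl f s A e) (dl f s {v} e)

theorem card_inc (F : Finset E) (f s : E → V) (v : V) :
    ((F.filter fun e => dl f s {v} e ≠ 0).card : ℤ) = dd F f s {v} := by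
  rw [Finset.card_filter, dd]
  push_cast
  refine Finset.sum_congr rfl fun e _ => ?_
  rcases dl_cases f s {v} e with h | h | h <;> simp [h]

theorem oth_update {f s : E → V} {e1 e : E} {a b v : V} (h : e ≠ e1) :
    oth (Function.update f e1 a) (Function.update s e1 b) v e = oth f s v e := by
  simp [oth, h]

theorem oth_mem {W : Finset V} {F : Finset E} {f s : E → V} (h : ∀ e ∈ F, f e ∈ W ∧ s e ∈ W)
    {v : V} {e : E} (he : e ∈ F) : oth f s v e ∈ W := by
  unfold oth; split_ifs
  · exact (h e he).2
  · exact (h e he).1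

/-- A zero vertex without half-edges. -/
theorem zcase0 {W : Finset V} {F : Finset E} {f s : E → V} {t o i : V → ℤ}
    (h : Good W F f s t o i)
    (IH : ∀ (W' : Finset V) (F' : Finset E) (f' s' : E → V) (t' o' i' : V → ℤ),
      W'.card < W.card → Good W' F' f' s' t' o' i' → Solv W' F' f' s' t')
    (hst : ∀ A ⊆ W, A ≠ W → 2 ≤ A.card →
      6 + nrm (∑ v ∈ A, t v + ∑ v ∈ A, i v - ∑ v ∈ A, o v) ≤
      dd F f s A + ∑ v ∈ A, o v + ∑ v ∈ A, i v)
    {v : V} (hv : v ∈ W) (ho : o v = 0) (hi : i v = 0) (hd : dd F f s {v} = 4)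
    (ht : (6 : ℤ) ∣ t v) : Solv W F f s t := by
  have hK := card_inc F f s v
  set K := F.filter fun e => dl f s {v} e ≠ 0 with hKdef
  have hK4 : K.card = 3 + 1 := by omega
  obtain ⟨e4, T, h4, hT, hT3⟩ := Finset.card_eq_succ.1 hK4
  obtain ⟨e1, e2, e3, h12, h13, h23, rfl⟩ := Finset.card_eq_three.1 hT3
  simp only [mem_insert, mem_singleton, not_or] at h4
  obtain ⟨h41, h42, h43⟩ := h4
  have hm : ∀ e, e ∈ K ↔ e = e4 ∨ e = e1 ∨ e = e2 ∨ e = e3 := by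
    intro e; rw [← hT]; simp
  have hm' : ∀ e, e ∈ K ↔ e ∈ F ∧ dl f s {v} e ≠ 0 := by
    intro e; rw [hKdef, mem_filter]
  have k1 := (hm' e1).1 ((hm e1).2 (by simp))
  have k2 := (hm' e2).1 ((hm e2).2 (by simp))
  have k3 := (hm' e3).1 ((hm e3).2 (by simp))
  have k4 := (hm' e4).1 ((hm e4).2 (by simp))
  have m3 : e3 ∈ F.erase e2 := Finset.mem_erase.2 ⟨Ne.symm h23, k3.1⟩
  have m4 : e4 ∈ F.erase e2 := Finset.mem_erase.2 ⟨h42, k4.1⟩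
  set y1 := oth f s v e1 with y1d
  set y2 := oth f s v e2 with y2d
  set f1 := Function.update f e1 y1 with f1d
  set s1 := Function.update s e1 y2 with s1d
  have d3 : dl f1 s1 {v} e3 ≠ 0 := by rw [f1d, s1d, dl_update _ (Ne.symm h13)]; exact k3.2
  have d4 : dl f1 s1 {v} e4 ≠ 0 := by rw [f1d, s1d, dl_update _ h41]; exact k4.2
  have y1v : y1 ≠ v := (oth_spec k1.2).2.1
  have y2v : y2 ≠ v := (oth_spec k2.2).2.1
  have y3v : oth f1 s1 v e3 ≠ v := (oth_spec d3).2.1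
  have y4v : oth f1 s1 v e4 ≠ v := (oth_spec d4).2.1
  have b1 := Base.lift k1.1 k2.1 h12 k1.2 k2.2 h.base
  have b2 := Base.lift m3 m4 (Ne.symm h43) d3 d4 b1
  apply Solv.lift k1.1 k2.1 h12 k1.2 k2.2
  apply Solv.lift m3 m4 (Ne.symm h43) d3 d4
  have hz : ∀ e ∈ (F.erase e2).erase e4,
      dl (Function.update f1 e3 (oth f1 s1 v e3)) (Function.update s1 e3 (oth f1 s1 v e4)) {v} e = 0 := by
    intro e he
    simp only [mem_erase] at he
    by_cases a3 : e = e3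
    · subst a3; rw [dl_update_self, ind_ne y3v, ind_ne y4v]; simp
    · rw [dl_update _ a3]
      by_cases a1 : e = e1
      · subst a1; rw [f1d, s1d, dl_update_self, ind_ne y1v, ind_ne y2v]; simp
      · rw [f1d, s1d, dl_update _ a1]
        by_contra h'
        have := (hm e).1 ((hm' e).2 ⟨he.2.2, h'⟩)
        tauto
  obtain ⟨b3, hdd⟩ := Base.remove hv hz ht b2
  apply Solv.remove hz ht
  refine IH _ _ _ _ _ o i (Finset.card_erase_lt_of_mem hv)
    ⟨b3.ends, b3.par, b3.tot, h.o0, h.i0, ?_, ?_⟩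
  · have := Finset.add_sum_erase W o hv
    have := Finset.add_sum_erase W i hv
    have := h.cap
    omega
  · intro A hA hne hneW
    have hvA : v ∉ A := fun h' => by simpa using hA h'
    have hAW : A ⊆ W := hA.trans (Finset.erase_subset _ _)
    have hAne : A ≠ W := fun h' => hvA (h' ▸ hv)
    have v1 := h.val A hAW hne hAne
    have hins : insert v A ≠ W := by
      intro h'; apply hneW; rw [← h', Finset.erase_insert hvA]
    have v2 := hst (insert v A) (Finset.insert_subset hv hAW) hins (by
      rw [Finset.card_insert_of_notMem hvA]
      have := hne.card_pos
      omega)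
    have v3 := dd_insert (f := f) (s := s) hvA (K := K) (Finset.filter_subset _ _)
      (fun e he => ((hm' e).1 he).2)
    rw [← hT, Finset.sum_insert (by simp [h41, h42, h43]), Finset.sum_insert (by simp [h12, h13]),
      Finset.sum_insert (by simp [h23]), Finset.sum_singleton] at v3
    rw [Finset.sum_insert hvA, Finset.sum_insert hvA, Finset.sum_insert hvA] at v2
    rw [hdd, dd_lift m3 m4 (Ne.symm h43) d3 d4 hvA, dd_lift k1.1 k2.1 h12 k1.2 k2.2 hvA]
    rw [f1d, s1d, oth_update (Ne.symm h13), oth_update h41]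
    have hn : nrm (t v + ∑ x ∈ A, t x + (i v + ∑ x ∈ A, i x) - (o v + ∑ x ∈ A, o x)) =
        nrm (∑ x ∈ A, t x + ∑ x ∈ A, i x - ∑ x ∈ A, o x) := by
      unfold nrm; omega
    rw [hn] at v2
    have z1 := ind_cases A y1
    have z2 := ind_cases A y2
    have z3 := ind_cases A (oth f s v e3)
    have z4 := ind_cases A (oth f s v e4)
    generalize nrm (∑ x ∈ A, t x + ∑ x ∈ A, i x - ∑ x ∈ A, o x) = n at v1 v2 ⊢
    generalize ind A y1 = w1 at z1 v3 ⊢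
    generalize ind A y2 = w2 at z2 v3 ⊢
    generalize ind A (oth f s v e3) = w3 at z3 v3 ⊢
    generalize ind A (oth f s v e4) = w4 at z4 v3 ⊢
    rcases z1 with rfl | rfl <;> rcases z2 with rfl | rfl <;> rcases z3 with rfl | rfl <;>
      rcases z4 with rfl | rfl <;> omega

/-- A zero vertex with an outgoing half-edge. -/
theorem zcase1 {W : Finset V} {F : Finset E} {f s : E → V} {t o i : V → ℤ}
    (h : Good W F f s t o i)
    (IH : ∀ (W' : Finset V) (F' : Finset E) (f' s' : E → V) (t' o' i' : V → ℤ),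
      W'.card < W.card → Good W' F' f' s' t' o' i' → Solv W' F' f' s' t')
    (hst : ∀ A ⊆ W, A ≠ W → 2 ≤ A.card →
      6 + nrm (∑ v ∈ A, t v + ∑ v ∈ A, i v - ∑ v ∈ A, o v) ≤
      dd F f s A + ∑ v ∈ A, o v + ∑ v ∈ A, i v)
    {v : V} (hv : v ∈ W) (ho : o v = 1) (hi : i v = 0) (hd : dd F f s {v} = 3)
    (ht : (6 : ℤ) ∣ t v - 1) : Solv W F f s t := by
  have hK := card_inc F f s v
  set K := F.filter fun e => dl f s {v} e ≠ 0 with hKdef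
  have hK4 : K.card = 3 := by omega
  obtain ⟨e1, e2, e3, h12, h13, h23, hT⟩ := Finset.card_eq_three.1 hK4
  have hm : ∀ e, e ∈ K ↔ e = e1 ∨ e = e2 ∨ e = e3 := by
    intro e; rw [hT]; simp
  have hm' : ∀ e, e ∈ K ↔ e ∈ F ∧ dl f s {v} e ≠ 0 := by
    intro e; rw [hKdef, mem_filter]
  have k1 := (hm' e1).1 ((hm e1).2 (by simp))
  have k2 := (hm' e2).1 ((hm e2).2 (by simp))
  have k3 := (hm' e3).1 ((hm e3).2 (by simp))
  have m3 : e3 ∈ F.erase e2 := Finset.mem_erase.2 ⟨Ne.symm h23, k3.1⟩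
  set y1 := oth f s v e1 with y1d
  set y2 := oth f s v e2 with y2d
  set y3 := oth f s v e3 with y3d
  set f1 := Function.update f e1 y1 with f1d
  set s1 := Function.update s e1 y2 with s1d
  have d3 : ∀ A, dl f1 s1 A e3 = dl f s A e3 := by
    intro A; rw [f1d, s1d, dl_update _ (Ne.symm h13)]
  have y1v : y1 ≠ v := (oth_spec k1.2).2.1
  have y2v : y2 ≠ v := (oth_spec k2.2).2.1
  obtain ⟨p3, y3v, q3, -⟩ := oth_spec k3.2
  have b1 := Base.lift k1.1 k2.1 h12 k1.2 k2.2 h.base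
  have b2 := Base.del m3 p3 b1
  apply Solv.lift k1.1 k2.1 h12 k1.2 k2.2
  apply Solv.del m3 p3
  have hz : ∀ e ∈ (F.erase e2).erase e3, dl f1 s1 {v} e = 0 := by
    intro e he
    simp only [mem_erase] at he
    by_cases a1 : e = e1
    · subst a1; rw [f1d, s1d, dl_update_self, ind_ne y1v, ind_ne y2v]; simp
    · rw [f1d, s1d, dl_update _ a1]
      by_contra h'
      have := (hm e).1 ((hm' e).2 ⟨he.2.2, h'⟩)
      tauto
  have ht' : (6 : ℤ) ∣ t v - dl f s {v} e3 * dl f1 s1 {v} e3 := by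
    rw [d3]; rcases p3 with p | p <;> rw [p] <;> omega
  obtain ⟨b3, hdd⟩ := Base.remove (t := fun u => t u - dl f s {v} e3 * dl f1 s1 {u} e3) hv hz ht' b2
  apply Solv.remove hz ht'
  have so : ∀ A : Finset V, ∑ u ∈ A, (o u + ind {u} y3) = ∑ u ∈ A, o u + ind A y3 := by
    intro A; rw [Finset.sum_add_distrib, ← ind_sum]
  refine IH _ _ _ _ _ (fun u => o u + ind {u} y3) i (Finset.card_erase_lt_of_mem hv)
    ⟨b3.ends, b3.par, b3.tot, fun u => ?_, h.i0, ?_, ?_⟩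
  · have := h.o0 u
    have := ind_cases {u} y3
    show 0 ≤ o u + ind {u} y3
    omega
  · rw [so]
    have := Finset.add_sum_erase W o hv
    have := Finset.add_sum_erase W i hv
    have := h.cap
    have := ind_cases (W.erase v) y3
    omega
  · intro A hA hne hneW
    have hvA : v ∉ A := fun h' => by simpa using hA h'
    have hAW : A ⊆ W := hA.trans (Finset.erase_subset _ _)
    have hAne : A ≠ W := fun h' => hvA (h' ▸ hv)
    have v1 := h.val A hAW hne hAne
    have hins : insert v A ≠ W := by
      intro h'; apply hneW; rw [← h', Finset.erase_insert hvA]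
    have v2 := hst (insert v A) (Finset.insert_subset hv hAW) hins (by
      rw [Finset.card_insert_of_notMem hvA]
      have := hne.card_pos
      omega)
    have v3 := dd_insert (f := f) (s := s) hvA (K := K) (Finset.filter_subset _ _)
      (fun e he => ((hm' e).1 he).2)
    rw [hT, Finset.sum_insert (by simp [h12, h13]),
      Finset.sum_insert (by simp [h23]), Finset.sum_singleton] at v3
    rw [Finset.sum_insert hvA, Finset.sum_insert hvA, Finset.sum_insert hvA] at v2
    rw [hdd, dd_del m3, dd_lift k1.1 k2.1 h12 k1.2 k2.2 hvA, so, sum_del, d3, q3 A]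
    have hv0 : ind A v = 0 := by simp [ind, hvA]
    rw [hv0, ← y1d, ← y2d, ← y3d]
    have hn : nrm (t v + ∑ x ∈ A, t x + (i v + ∑ x ∈ A, i x) - (o v + ∑ x ∈ A, o x)) =
        nrm (∑ x ∈ A, t x + ∑ x ∈ A, i x - ∑ x ∈ A, o x) := by
      unfold nrm; omega
    rw [hn] at v2
    have hn2 : ∑ x ∈ A, t x - dl f s {v} e3 * (dl f s {v} e3 * (0 - ind A y3)) + ∑ x ∈ A, i x -
        (∑ x ∈ A, o x + ind A y3) = ∑ x ∈ A, t x + ∑ x ∈ A, i x - ∑ x ∈ A, o x := by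
      rcases p3 with p | p <;> rw [p] <;> ring
    have hn3 : |dl f s {v} e3 * (0 - ind A y3)| = ind A y3 := by
      rcases p3 with p | p <;> rcases ind_cases A y3 with z | z <;> rw [p, z] <;> norm_num
    rw [hn2, hn3]
    have z1 := ind_cases A y1
    have z2 := ind_cases A y2
    have z3 := ind_cases A y3
    generalize nrm (∑ x ∈ A, t x + ∑ x ∈ A, i x - ∑ x ∈ A, o x) = n at v1 v2 ⊢
    generalize ind A y1 = w1 at z1 v3 ⊢
    generalize ind A y2 = w2 at z2 v3 ⊢
    generalize ind A y3 = w3 at z3 v3 ⊢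
    rcases z1 with rfl | rfl <;> rcases z2 with rfl | rfl <;> rcases z3 with rfl | rfl <;> omega

/-- A tight vertex with zero residue. -/
theorem zcase {W : Finset V} {F : Finset E} {f s : E → V} {t o i : V → ℤ}
    (h : Good W F f s t o i)
    (IH : ∀ (W' : Finset V) (F' : Finset E) (f' s' : E → V) (t' o' i' : V → ℤ),
      W'.card < W.card → Good W' F' f' s' t' o' i' → Solv W' F' f' s' t')
    (hst : ∀ A ⊆ W, A ≠ W → 2 ≤ A.card →
      6 + nrm (∑ v ∈ A, t v + ∑ v ∈ A, i v - ∑ v ∈ A, o v) ≤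
      dd F f s A + ∑ v ∈ A, o v + ∑ v ∈ A, i v)
    (h3 : 3 ≤ W.card)
    {v : V} (hv : v ∈ W) (hN : dd F f s {v} + o v + i v = 4)
    (hx : (6 : ℤ) ∣ t v + i v - o v) : Solv W F f s t := by
  have e1 : W.erase v ≠ W := fun h' => by
    have : v ∈ W.erase v := by rw [h']; exact hv
    simp at this
  have a1 := hst (W.erase v) (Finset.erase_subset _ _) e1 (by
    rw [Finset.card_erase_of_mem hv]; omega)
  have a2 : dd F f s (W.erase v) = dd F f s {v} := by
    rw [← Finset.sdiff_singleton_eq_erase, dd_sdiff h.ends]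
  have a3 := Finset.add_sum_erase W o hv
  have a4 := Finset.add_sum_erase W i hv
  have a5 := Finset.add_sum_erase W t hv
  have a6 := h.cap
  have a7 := h.tot
  have a8 := h.o0 v
  have a9 := h.i0 v
  have key : (o v = 0 ∧ i v = 0) ∨ (o v = 1 ∧ i v = 0) ∨ (o v = 0 ∧ i v = 1) := by
    unfold nrm at a1; omega
  rcases key with ⟨k1, k2⟩ | ⟨k1, k2⟩ | ⟨k1, k2⟩
  · exact zcase0 h IH hst hv k1 k2 (by omega) (by omega)
  · exact zcase1 h IH hst hv k1 k2 (by omega) (by omega)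
  · apply Solv.neg
    refine zcase1 h.neg IH (fun A b1 b2 b3 => ?_) hv k2 k1 (by omega) (by omega)
    have := hst A b1 b2 b3
    rw [Finset.sum_neg_distrib]
    unfold nrm at *; omega
/-- Graphs with at most two vertices. -/
theorem small_case {W : Finset V} {F : Finset E} {f s : E → V} {t o i : V → ℤ}
    (h : Good W F f s t o i) (hW : W.card ≤ 2) : Solv W F f s t := by
  have hc : W.card = 0 ∨ W.card = 1 ∨ W.card = 2 := by omega
  rcases hc with hc | hc | hc
  · rw [Finset.card_eq_zero] at hc; subst hc
    exact ⟨fun _ => 1, fun _ => Or.inl rfl, fun v hv => by simp at hv⟩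
  · obtain ⟨v, rfl⟩ := Finset.card_eq_one.1 hc
    refine ⟨fun _ => 1, fun _ => Or.inl rfl, fun u hu => ?_⟩
    rw [Finset.mem_singleton] at hu; subst hu
    have h1 := h.tot
    rw [Finset.sum_singleton] at h1
    have h2 : ∑ e ∈ F, (1 : ℤ) * dl f s {u} e = 0 := by
      refine Finset.sum_eq_zero fun e he => ?_
      have := h.ends e he
      simp [dl, ind] at this ⊢
      simp [this]
    rw [h2]; omega
  · obtain ⟨u, v, huv, rfl⟩ := Finset.card_eq_two.1 hc
    have hK := card_inc F f s v
    set K := F.filter fun e => dl f s {v} e ≠ 0 with hKdef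
    have su : ({u, v} : Finset V) \ {v} = {u} := by
      ext x; simp only [mem_sdiff, mem_insert, mem_singleton]
      constructor
      · tauto
      · rintro rfl; exact ⟨Or.inl rfl, huv⟩
    have hdu : dd F f s {u} = dd F f s {v} := by
      rw [← su, dd_sdiff h.ends]
    have v1 := h.val {u} (by simp) (by simp) (by
      intro h'; have : v ∈ ({u} : Finset V) := by rw [h']; simp
      rw [mem_singleton] at this; exact huv this.symm)
    have v2 := h.val {v} (by simp) (by simp) (by
      intro h'; have : u ∈ ({v} : Finset V) := by rw [h']; simp
      rw [mem_singleton] at this; exact huv this)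
    have v3 := h.tot
    have v4 := h.cap
    have v5 := h.parA (A := {v}) (by simp)
    rw [Finset.sum_pair huv] at v3
    rw [Finset.sum_pair huv, Finset.sum_pair huv] at v4
    simp only [Finset.sum_singleton] at v1 v2 v5
    rw [hdu] at v1
    have p1 := h.o0 u
    have p2 := h.o0 v
    have p3 := h.i0 u
    have p4 := h.i0 v
    have hd2 : ((t v + dd F f s {v}) / 2) % 3 ≤ dd F f s {v} := by
      generalize dd F f s {v} = d at *
      have d1 : 1 ≤ d := by
        have := nrm_bd (t u + i u - o u)
        have := nrm_bd (t v + i v - o v)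
        omega
      by_contra hcon
      have d2 : d = 1 := by omega
      subst d2
      have t3 : t v % 6 = 3 := by omega
      have t4 : t u % 6 = 3 := by omega
      obtain ⟨q, hq⟩ : ∃ q, t v = 6 * q + 3 := ⟨t v / 6, by omega⟩
      obtain ⟨q', hq'⟩ : ∃ q, t u = 6 * q + 3 := ⟨t u / 6, by omega⟩
      have n1 : nrm (t v + i v - o v) = nrm (3 + i v - o v) := by unfold nrm; omega
      have n2 : nrm (t u + i u - o u) = nrm (3 + i u - o u) := by unfold nrm; omega
      rw [n1] at v2
      rw [n2] at v1
      have n3 := nrm_bd (3 + i v - o v)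
      have n4 := nrm_bd (3 + i u - o u)
      have b1 : o u ≤ 5 ∧ o v ≤ 5 ∧ i u ≤ 5 ∧ i v ≤ 5 := by omega
      obtain ⟨b1, b2, b3, b4⟩ := b1
      have c1 : o u + i u ≤ 4 := by omega
      have c2 : o v + i v ≤ 4 := by omega
      clear n1 n2 hdu hK hq hq' t3 t4 v3 v5 hcon
      generalize o u = ou at *
      generalize o v = ov at *
      generalize i u = iu at *
      generalize i v = iv at *
      unfold nrm at *
      interval_cases ou <;> interval_cases iu <;> first | omega | (interval_cases ov <;> omega)
    obtain ⟨k, hk⟩ : ∃ k : ℕ, (k : ℤ) = ((t v + dd F f s {v}) / 2) % 3 :=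
      ⟨(((t v + dd F f s {v}) / 2) % 3).toNat, by omega⟩
    obtain ⟨K', hK', hk'⟩ := Finset.exists_subset_card_eq (s := K) (n := k) (by omega)
    let σ : E → ℤ := fun e => if e ∈ K' then dl f s {v} e else if e ∈ K then - dl f s {v} e else 1
    have hm' : ∀ e, e ∈ K ↔ e ∈ F ∧ dl f s {v} e ≠ 0 := by
      intro e; rw [hKdef, mem_filter]
    have hnet : ∑ e ∈ F, σ e * dl f s {v} e = 2 * k - dd F f s {v} := by
      have e1 : ∑ e ∈ F, σ e * dl f s {v} e =
          ∑ e ∈ F, ((if e ∈ K' then 2 else 0) - |dl f s {v} e|) := by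
        refine Finset.sum_congr rfl fun e he => ?_
        by_cases a : e ∈ K'
        · simp only [σ, a, if_true]
          have := ((hm' e).1 (hK' a)).2
          rcases dl_cases f s {v} e with h | h | h
          · exact absurd h this
          · rw [h]; norm_num
          · rw [h]; norm_num
        · simp only [σ, a, if_false]
          by_cases b : e ∈ K
          · simp only [b, if_true]
            rcases dl_cases f s {v} e with h | h | h <;> rw [h] <;> norm_num
          · have : dl f s {v} e = 0 := by
              by_contra h'; exact b ((hm' e).2 ⟨he, h'⟩)
            rw [this]; simp
      rw [e1, Finset.sum_sub_distrib, ← Finset.sum_filter]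
      have e2 : F.filter (fun e => e ∈ K') = K' := by
        ext e; rw [mem_filter]
        exact ⟨fun h => h.2, fun h => ⟨((hm' e).1 (hK' h)).1, h⟩⟩
      rw [e2, Finset.sum_const, hk', dd]
      simp; ring
    refine ⟨σ, fun e => ?_, fun w hw => ?_⟩
    · by_cases a : e ∈ K'
      · simp only [σ, a, if_true]
        have := ((hm' e).1 (hK' a)).2
        have := dl_cases f s {v} e
        tauto
      · simp only [σ, a, if_false]
        by_cases b : e ∈ K
        · simp only [b, if_true]
          have := ((hm' e).1 b).2
          have := dl_cases f s {v} e
          omega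
        · simp [b]
    · simp only [mem_insert, mem_singleton] at hw
      rcases hw with rfl | rfl
      · have : ∑ e ∈ F, σ e * dl f s {w} e = - ∑ e ∈ F, σ e * dl f s {v} e := by
          rw [← Finset.sum_neg_distrib]
          refine Finset.sum_congr rfl fun e he => ?_
          rw [← su, dl_sdiff (h.ends e he)]; ring
        rw [this, hnet]; omega
      · rw [hnet]; omega
/-- Deleting an edge directed from `a` to `b`. -/
theorem delstep {W : Finset V} {F : Finset E} {f s : E → V} {t o i : V → ℤ}
    (h : Good W F f s t o i)
    (IH2 : ∀ (F' : Finset E) (t' o' i' : V → ℤ),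
      F'.card < F.card → Good W F' f s t' o' i' → Solv W F' f s t')
    (hst : ∀ A ⊆ W, A ≠ W → 2 ≤ A.card →
      6 + nrm (∑ v ∈ A, t v + ∑ v ∈ A, i v - ∑ v ∈ A, o v) ≤
      dd F f s A + ∑ v ∈ A, o v + ∑ v ∈ A, i v)
    {e : E} (he : e ∈ F) {ε : ℤ} (hε : ε = 1 ∨ ε = -1) {a b : V} (hab : a ≠ b)
    (hdl : ∀ A, dl f s A e = ε * (ind A a - ind A b))
    (ha : 5 + nrm (t a + i a - o a - 1) ≤ dd F f s {a} + o a + i a)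
    (hb : 5 + nrm (t b + i b - o b + 1) ≤ dd F f s {b} + o b + i b) : Solv W F f s t := by
  apply Solv.del he hε
  have b1 := Base.del he hε h.base
  refine IH2 _ _ o i (Finset.card_erase_lt_of_mem he)
    ⟨b1.ends, b1.par, b1.tot, h.o0, h.i0, h.cap, ?_⟩
  intro A hA hne hneW
  rw [dd_del he, sum_del, hdl A]
  have e1 : ε * (ε * (ind A a - ind A b)) = ind A a - ind A b := by
    rcases hε with r | r <;> rw [r] <;> ring
  have e2 : |ε * (ind A a - ind A b)| = |ind A a - ind A b| := by
    rcases hε with r | r <;> rw [r]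
    · rw [one_mul]
    · rw [neg_one_mul, abs_neg]
  rw [e1, e2]
  by_cases hc : 2 ≤ A.card
  · have v2 := hst A hA hneW hc
    generalize dd F f s A = d at *
    generalize ∑ v ∈ A, t v = p at *
    generalize ∑ v ∈ A, o v = q at *
    generalize ∑ v ∈ A, i v = r at *
    unfold nrm at *
    rcases ind_cases A a with z1 | z1 <;> rcases ind_cases A b with z2 | z2 <;> rw [z1, z2] <;>
      norm_num <;> omega
  · have hc1 : A.card = 1 := by have := hne.card_pos; omega
    obtain ⟨w, rfl⟩ := Finset.card_eq_one.1 hc1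
    have v1 := h.val {w} hA hne hneW
    simp only [Finset.sum_singleton] at v1 ⊢
    by_cases wa : w = a
    · subst wa
      rw [ind_self, ind_ne hab.symm]
      norm_num
      have : t w - 1 + i w - o w = t w + i w - o w - 1 := by ring
      rw [this]; omega
    · rw [ind_ne (Ne.symm wa)]
      by_cases wb : w = b
      · subst wb
        rw [ind_self]
        norm_num
        have : t w + 1 + i w - o w = t w + i w - o w + 1 := by ring
        rw [this]; omega
      · rw [ind_ne (Ne.symm wb)]; simpa using v1

theorem exists_edge {F : Finset E} {f s : E → V} {A : Finset V} (h : 1 ≤ dd F f s A) :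
    ∃ e ∈ F, dl f s A e ≠ 0 := by
  by_contra hcon
  push Not at hcon
  have : dd F f s A = 0 := Finset.sum_eq_zero fun e he => by rw [hcon e he, abs_zero]
  omega

/-- All vertices tight with residue 1 or 2. -/
theorem caseP {W : Finset V} {F : Finset E} {f s : E → V} {t o i : V → ℤ}
    (h : Good W F f s t o i)
    (IH2 : ∀ (F' : Finset E) (t' o' i' : V → ℤ),
      F'.card < F.card → Good W F' f s t' o' i' → Solv W F' f s t')
    (IH3 : ∀ (o' i' : V → ℤ), ∑ v ∈ W, o' v + ∑ v ∈ W, i' v < ∑ v ∈ W, o v + ∑ v ∈ W, i v →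
      Good W F f s t o' i' → Solv W F f s t)
    (hst : ∀ A ⊆ W, A ≠ W → 2 ≤ A.card →
      6 + nrm (∑ v ∈ A, t v + ∑ v ∈ A, i v - ∑ v ∈ A, o v) ≤
      dd F f s A + ∑ v ∈ A, o v + ∑ v ∈ A, i v)
    (h3 : 3 ≤ W.card)
    (hP : ∀ v ∈ W, dd F f s {v} + o v + i v = 4 + nrm (t v + i v - o v) ∧
      ((t v + i v - o v) % 6 = 1 ∨ (t v + i v - o v) % 6 = 2)) : Solv W F f s t := by
  have hs1 : ∀ v ∈ W, ({v} : Finset V) ≠ W := by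
    intro v hv h'
    rw [← h'] at h3; simp at h3
  by_cases ha : ∃ v ∈ W, 1 ≤ i v
  · obtain ⟨v, hv, hiv⟩ := ha
    have si : ∀ A : Finset V, ∑ u ∈ A, (i u - ind {u} v) = ∑ u ∈ A, i u - ind A v := by
      intro A; rw [Finset.sum_sub_distrib, ← ind_sum]
    have iW : ind W v = 1 := by simp [ind, hv]
    refine IH3 o (fun u => i u - ind {u} v) ?_ ⟨h.ends, h.par, h.tot, h.o0, fun u => ?_, ?_, ?_⟩
    · rw [si, iW]; omega
    · show 0 ≤ i u - ind {u} v
      have := h.i0 u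
      by_cases a : v = u
      · subst a; rw [ind_self]; omega
      · rw [ind_ne a]; omega
    · rw [si, iW]; have := h.cap; omega
    · intro A hA hne hneW
      rw [si]
      have v1 := h.val A hA hne hneW
      rcases ind_cases A v with z | z
      · rw [z]; simpa using v1
      · rw [z]
        by_cases hc : 2 ≤ A.card
        · have v2 := hst A hA hneW hc
          unfold nrm at *; omega
        · have hc1 : A.card = 1 := by have := hne.card_pos; omega
          obtain ⟨w, rfl⟩ := Finset.card_eq_one.1 hc1
          have := hP w (hA (by simp))
          simp only [Finset.sum_singleton]
          unfold nrm at *; omega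
  · push Not at ha
    have iz : ∀ v ∈ W, i v = 0 := fun v hv => by have := ha v hv; have := h.i0 v; omega
    by_cases hb : ∃ v ∈ W, 1 ≤ o v
    · obtain ⟨v, hv, hov⟩ := hb
      obtain ⟨e, he, hdl⟩ := exists_edge (h.conn (A := {v}) (by simpa using hv) (by simp) (hs1 v hv))
      obtain ⟨p, hy, hq, -⟩ := oth_spec hdl
      have hyW : oth f s v e ∈ W := oth_mem h.ends he
      generalize oth f s v e = y at *
      generalize dl f s {v} e = δ at *
      have hε : -δ = 1 ∨ -δ = -1 := by omega
      apply Solv.del he hε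
      have b1 := Base.del he hε h.base
      have si : ∀ A : Finset V, ∑ u ∈ A, (i u + 2 * ind {u} v) = ∑ u ∈ A, i u + 2 * ind A v := by
        intro A; rw [Finset.sum_add_distrib, ← Finset.mul_sum, ← ind_sum]
      have so : ∀ A : Finset V, ∑ u ∈ A, (o u - ind {u} v) = ∑ u ∈ A, o u - ind A v := by
        intro A; rw [Finset.sum_sub_distrib, ← ind_sum]
      have iW : ind W v = 1 := by simp [ind, hv]
      refine IH2 _ _ (fun u => o u - ind {u} v) (fun u => i u + 2 * ind {u} v)
        (Finset.card_erase_lt_of_mem he) ⟨b1.ends, b1.par, b1.tot, fun u => ?_, fun u => ?_, ?_, ?_⟩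
      · show 0 ≤ o u - ind {u} v
        have := h.o0 u
        by_cases a : v = u
        · subst a; rw [ind_self]; omega
        · rw [ind_ne a]; omega
      · show 0 ≤ i u + 2 * ind {u} v
        have := h.i0 u
        have := ind_cases {u} v
        omega
      · rw [si, so, iW]
        have := h.cap
        have : ∑ u ∈ W, i u = 0 := Finset.sum_eq_zero iz
        omega
      · intro A hA hne hneW
        rw [si, so, dd_del he, sum_del, hq A]
        have e1 : -δ * (δ * (ind A v - ind A y)) = ind A y - ind A v := by
          rcases p with r | r <;> rw [r] <;> ring
        have e2 : |δ * (ind A v - ind A y)| = |ind A v - ind A y| := by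
          rcases p with r | r <;> rw [r]
          · rw [one_mul]
          · rw [neg_one_mul, abs_neg]
        rw [e1, e2]
        by_cases hc : 2 ≤ A.card
        · have v2 := hst A hA hneW hc
          generalize dd F f s A = d at *
          generalize ∑ v ∈ A, t v = p at *
          generalize ∑ v ∈ A, o v = q at *
          generalize ∑ v ∈ A, i v = r at *
          unfold nrm at *
          rcases ind_cases A v with z1 | z1 <;> rcases ind_cases A y with z2 | z2 <;>
            rw [z1, z2] <;> norm_num <;> omega
        · have hc1 : A.card = 1 := by have := hne.card_pos; omega
          obtain ⟨w, rfl⟩ := Finset.card_eq_one.1 hc1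
          have v1 := h.val {w} hA hne hneW
          have v2 := hP w (hA (by simp))
          simp only [Finset.sum_singleton] at v1 ⊢
          by_cases wa : w = v
          · subst wa
            rw [ind_self, ind_ne hy]
            norm_num
            unfold nrm at *; omega
          · rw [ind_ne (Ne.symm wa)]
            by_cases wb : w = y
            · subst wb
              rw [ind_self]
              norm_num
              unfold nrm at *; omega
            · rw [ind_ne (Ne.symm wb)]; simpa using v1
    · push Not at hb
      exfalso
      have oz : ∀ v ∈ W, o v = 0 := fun v hv => by have := hb v hv; have := h.o0 v; omega
      obtain ⟨v, hv⟩ : W.Nonempty := Finset.card_pos.1 (by omega)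
      have e1 : W.erase v ≠ W := fun h' => by
        have : v ∈ W.erase v := by rw [h']; exact hv
        simp at this
      have a1 := hst (W.erase v) (Finset.erase_subset _ _) e1 (by
        rw [Finset.card_erase_of_mem hv]; omega)
      have a2 : dd F f s (W.erase v) = dd F f s {v} := by
        rw [← Finset.sdiff_singleton_eq_erase, dd_sdiff h.ends]
      have a3 : ∑ u ∈ W.erase v, o u = 0 :=
        Finset.sum_eq_zero fun u hu => oz u (Finset.mem_of_mem_erase hu)
      have a4 : ∑ u ∈ W.erase v, i u = 0 :=
        Finset.sum_eq_zero fun u hu => iz u (Finset.mem_of_mem_erase hu)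
      have a5 := Finset.add_sum_erase W t hv
      have a7 := h.tot
      have a8 := oz v hv
      have a9 := iz v hv
      have a10 := hP v hv
      unfold nrm at *; omega

set_option maxHeartbeats 1600000 in
/-- The inductive step. -/
theorem step {W : Finset V} {F : Finset E} {f s : E → V} {t o i : V → ℤ}
    (h : Good W F f s t o i)
    (IH1 : ∀ (W' : Finset V) (F' : Finset E) (f' s' : E → V) (t' o' i' : V → ℤ),
      W'.card < W.card → Good W' F' f' s' t' o' i' → Solv W' F' f' s' t')
    (IH2 : ∀ (F' : Finset E) (t' o' i' : V → ℤ),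
      F'.card < F.card → Good W F' f s t' o' i' → Solv W F' f s t')
    (IH3 : ∀ (t' o' i' : V → ℤ), ∑ v ∈ W, o' v + ∑ v ∈ W, i' v < ∑ v ∈ W, o v + ∑ v ∈ W, i v →
      Good W F f s t' o' i' → Solv W F f s t') : Solv W F f s t := by
  by_cases h3 : W.card ≤ 2
  · exact small_case h h3
  push Not at h3
  by_cases htight : ∃ A, A ⊆ W ∧ A ≠ W ∧ 2 ≤ A.card ∧ dd F f s A + ∑ v ∈ A, o v + ∑ v ∈ A, i v ≤
      4 + nrm (∑ v ∈ A, t v + ∑ v ∈ A, i v - ∑ v ∈ A, o v)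
  · obtain ⟨A, a1, a2, a3, a4⟩ := htight
    exact claim1 h IH1 a1 a2 a3 a4
  push Not at htight
  have hst : ∀ A ⊆ W, A ≠ W → 2 ≤ A.card →
      6 + nrm (∑ v ∈ A, t v + ∑ v ∈ A, i v - ∑ v ∈ A, o v) ≤
      dd F f s A + ∑ v ∈ A, o v + ∑ v ∈ A, i v := by
    intro A a1 a2 a3
    have b1 := htight A a1 a2 a3
    have b2 := h.parA a1
    unfold nrm at *; omega
  have hs1 : ∀ v ∈ W, ({v} : Finset V) ≠ W := by
    intro v hv h'
    rw [← h'] at h3; simp at h3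
  have hval : ∀ v ∈ W, 4 + nrm (t v + i v - o v) ≤ dd F f s {v} + o v + i v ∧
      (2 : ℤ) ∣ t v - dd F f s {v} := by
    intro v hv
    have b1 := h.val {v} (by simpa using hv) (by simp) (hs1 v hv)
    have b2 := h.parA (A := {v}) (by simpa using hv)
    simp only [Finset.sum_singleton] at b1 b2
    exact ⟨b1, b2⟩
  by_cases hz : ∃ v ∈ W, dd F f s {v} + o v + i v = 4 ∧ (6 : ℤ) ∣ t v + i v - o v
  · obtain ⟨v, hv, z1, z2⟩ := hz
    exact zcase h IH1 hst (by omega) hv z1 z2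
  push Not at hz
  by_contra hns
  set TG : V → Prop := fun v => 5 + nrm (t v + i v - o v - 1) ≤ dd F f s {v} + o v + i v with hTG
  set HG : V → Prop := fun v => 5 + nrm (t v + i v - o v + 1) ≤ dd F f s {v} + o v + i v with hHG
  have hTH : ∀ v ∈ W, TG v ∨ HG v := by
    intro v hv
    have b1 := hval v hv
    have b2 := hz v hv
    simp only [hTG, hHG]
    generalize dd F f s {v} = d at *
    unfold nrm at *; omega
  have hE : ∀ v, ∀ e ∈ F, dl f s {v} e ≠ 0 → ¬ (TG v ∧ HG (oth f s v e)) ∧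
      ¬ (HG v ∧ TG (oth f s v e)) := by
    intro v e he hd
    obtain ⟨p, hy, hq, -⟩ := oth_spec hd
    refine ⟨fun hh => hns ?_, fun hh => hns ?_⟩
    · exact delstep h IH2 hst he p (Ne.symm hy) hq hh.1 hh.2
    · refine delstep h IH2 hst he (ε := - dl f s {v} e) (by omega) hy (fun A => ?_) hh.2 hh.1
      rw [hq A]; ring
  classical
  set A := W.filter TG with hA
  have hAcase : A = ∅ ∨ A = W := by
    by_contra hcon
    push Not at hcon
    obtain ⟨e, he, hdl⟩ := exists_edge (h.conn (A := A) (Finset.filter_subset _ _)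
      hcon.1 hcon.2)
    have hen := h.ends e he
    have m : ∀ u ∈ W, u ∈ A ↔ TG u := by intro u hu; rw [hA, mem_filter]; tauto
    by_cases c1 : f e ∈ A <;> by_cases c2 : s e ∈ A
    · simp [dl, ind, c1, c2] at hdl
    · have hne : s e ≠ f e := fun h' => c2 (h' ▸ c1)
      have hd : dl f s {f e} e ≠ 0 := by simp [dl, ind, hne]
      have ho : oth f s (f e) e = s e := by simp [oth]
      have := hE (f e) e he hd
      rw [ho] at this
      have k1 := (m _ hen.1).1 c1
      have k2 : ¬ TG (s e) := fun h' => c2 ((m _ hen.2).2 h')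
      have := hTH _ hen.2
      tauto
    · have hne : f e ≠ s e := fun h' => c1 (h' ▸ c2)
      have hd : dl f s {s e} e ≠ 0 := by simp [dl, ind, hne]
      have ho : oth f s (s e) e = f e := by simp [oth, hne]
      have := hE (s e) e he hd
      rw [ho] at this
      have k1 := (m _ hen.2).1 c2
      have k2 : ¬ TG (f e) := fun h' => c1 ((m _ hen.1).2 h')
      have := hTH _ hen.1
      tauto
    · simp [dl, ind, c1, c2] at hdl
  have hnb : ∀ v ∈ W, ∃ e ∈ F, dl f s {v} e ≠ 0 ∧ oth f s v e ∈ W := by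
    intro v hv
    obtain ⟨e, he, hdl⟩ := exists_edge (h.conn (A := {v}) (by simpa using hv) (by simp) (hs1 v hv))
    exact ⟨e, he, hdl, oth_mem h.ends he⟩
  rcases hAcase with hA0 | hA0
  · have nT : ∀ v ∈ W, ¬ TG v := by
      intro v hv h'
      have : v ∈ A := by rw [hA, mem_filter]; exact ⟨hv, h'⟩
      rw [hA0] at this; simp at this
    apply hns
    apply Solv.neg
    refine caseP h.neg (fun F' t' o' i' hc hg => IH2 F' t' o' i' hc hg)
      (fun o' i' hc hg => IH3 _ o' i' (by omega) hg) (fun B b1 b2 b3 => ?_) (by omega) ?_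
    · have := hst B b1 b2 b3
      rw [Finset.sum_neg_distrib]
      unfold nrm at *; omega
    · intro v hv
      have b1 := hval v hv
      have b2 := hz v hv
      have b3 := nT v hv
      simp only [hTG] at b3
      generalize dd F f s {v} = d at *
      show d + i v + o v = 4 + nrm (- t v + o v - i v) ∧ _
      unfold nrm at *; omega
  · have aT : ∀ v ∈ W, TG v := by
      intro v hv
      rw [← hA0, hA, mem_filter] at hv; exact hv.2
    apply hns
    refine caseP h IH2
      (fun o' i' hc hg => IH3 _ o' i' hc hg) hst (by omega) ?_
    intro v hv
    have b1 := hval v hv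
    have b2 := hz v hv
    obtain ⟨e, he, hd, hoW⟩ := hnb v hv
    have b3 : ¬ HG v := fun h' => (hE v e he hd).2 ⟨h', aT _ hoW⟩
    simp only [hHG] at b3
    generalize dd F f s {v} = d at *
    unfold nrm at *; omega

theorem main_aux : ∀ (n : ℕ) (W : Finset V), W.card = n → ∀ (F : Finset E) (f s : E → V)
    (t o i : V → ℤ), Good W F f s t o i → Solv W F f s t := by
  intro n
  induction n using Nat.strong_induction_on with
  | _ n IH1 =>
  intro W hW F f s
  have aux : ∀ (m : ℕ) (F : Finset E), F.card = m → ∀ (t o i : V → ℤ), Good W F f s t o i →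
      Solv W F f s t := by
    intro m
    induction m using Nat.strong_induction_on with
    | _ m IH2 =>
    intro F hF
    have aux2 : ∀ (k : ℕ) (t o i : V → ℤ), (∑ v ∈ W, o v + ∑ v ∈ W, i v).toNat = k →
        Good W F f s t o i → Solv W F f s t := by
      intro k
      induction k using Nat.strong_induction_on with
      | _ k IH3 =>
      intro t o i hk hG
      refine step hG (fun W' F' f' s' t' o' i' hc hg => ?_) (fun F' t' o' i' hc hg => ?_)
        (fun t' o' i' hc hg => ?_)
      · exact IH1 W'.card (by omega) W' rfl F' f' s' t' o' i' hg
      · exact IH2 F'.card (by omega) F' rfl t' o' i' hg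
      · have p1 : 0 ≤ ∑ v ∈ W, o' v := Finset.sum_nonneg fun v _ => hg.o0 v
        have p2 : 0 ≤ ∑ v ∈ W, i' v := Finset.sum_nonneg fun v _ => hg.i0 v
        exact IH3 (∑ v ∈ W, o' v + ∑ v ∈ W, i' v).toNat (by omega) t' o' i' rfl hg
    intro t o i hG
    exact aux2 _ t o i rfl hG
  intro t o i hG
  exact aux _ F rfl t o i hG

theorem Good.solv {W : Finset V} {F : Finset E} {f s : E → V} {t o i : V → ℤ}
    (h : Good W F f s t o i) : Solv W F f s t := main_aux _ W rfl F f s t o i h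
theorem card_cut (G : Multigraph V E) (A : Finset V) :
    ((G.cut A).card : ℤ) = dd univ G.fst G.snd A := by
  rw [cut, Finset.card_filter, dd]
  push_cast
  refine Finset.sum_congr rfl fun e _ => ?_
  by_cases a : G.fst e ∈ A <;> by_cases b : G.snd e ∈ A <;> simp [dl, ind, a, b]

theorem dd_submod (F : Finset E) (f s : E → V) (A B : Finset V) :
    dd F f s (A ∩ B) + dd F f s (A ∪ B) ≤ dd F f s A + dd F f s B := by
  simp only [dd]
  rw [← Finset.sum_add_distrib, ← Finset.sum_add_distrib]
  refine Finset.sum_le_sum fun e _ => ?_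
  by_cases a : f e ∈ A <;> by_cases b : s e ∈ A <;> by_cases a' : f e ∈ B <;>
    by_cases b' : s e ∈ B <;> simp [dl, ind, a, b, a', b']

theorem dd_compl (F : Finset E) (f s : E → V) (A : Finset V) :
    dd F f s Aᶜ = dd F f s A := by
  rw [Finset.compl_eq_univ_sdiff, dd_sdiff (fun e _ => ⟨mem_univ _, mem_univ _⟩)]

/-- A set of at most seven vertices meeting all sides of 5-cuts. -/
theorem hitting (G : Multigraph V E) (h5 : G.EdgeConnected 5) (hc : (G.kCuts 5).card ≤ 7) :
    ∃ R : Finset V, R.card ≤ 7 ∧ ∀ A : Finset V, A.Nonempty → A ≠ univ → (G.cut A).card = 5 →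
      (A ∩ R).Nonempty := by
  classical
  set S : Finset (Finset V) := univ.filter
    fun A => A.Nonempty ∧ A ≠ univ ∧ (G.cut A).card = 5 with hS
  have mS : ∀ A, A ∈ S ↔ A.Nonempty ∧ A ≠ univ ∧ (G.cut A).card = 5 := by
    intro A; rw [hS, mem_filter]; simp
  set M : Finset (Finset V) := S.filter fun A => ∀ B ∈ S, B ⊆ A → B = A with hM
  have mM : ∀ A, A ∈ M ↔ A ∈ S ∧ ∀ B ∈ S, B ⊆ A → B = A := by
    intro A; rw [hM, mem_filter]
  have hmin : ∀ A ∈ S, ∃ C ∈ M, C ⊆ A := by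
    intro A
    induction A using Finset.strongInduction with
    | H A ih =>
    intro hA
    by_cases hm : A ∈ M
    · exact ⟨A, hm, subset_rfl⟩
    · rw [mM] at hm
      push Not at hm
      obtain ⟨B, hB, hBA, hne⟩ := hm hA
      obtain ⟨C, hC, hCB⟩ := ih B (Finset.ssubset_iff_subset_ne.2 ⟨hBA, hne⟩) hB
      exact ⟨C, hC, hCB.trans hBA⟩
  have hcompl : ∀ A ∈ S, Aᶜ ∈ S := by
    intro A hA
    rw [mS] at hA ⊢
    refine ⟨?_, ?_, ?_⟩
    · rw [Finset.nonempty_iff_ne_empty]; intro h'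
      rw [Finset.compl_eq_empty_iff] at h'; exact hA.2.1 h'
    · intro h'
      rw [Finset.compl_eq_univ_iff] at h'; exact hA.1.ne_empty h'
    · have := card_cut G Aᶜ
      rw [dd_compl, ← card_cut] at this
      omega
  have hdisj : ∀ A ∈ M, ∀ B ∈ M, A ≠ B → Disjoint A B := by
    intro A hA B hB hne
    rw [mM] at hA hB
    by_contra hd
    rw [Finset.disjoint_iff_inter_eq_empty, ← ne_eq, ← Finset.nonempty_iff_ne_empty] at hd
    have a := (mS A).1 hA.1
    have b := (mS B).1 hB.1
    by_cases hu : A ∪ B = univ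
    · have hsub : Bᶜ ⊆ A := by
        intro x hx
        have : x ∈ A ∪ B := by rw [hu]; exact mem_univ x
        rw [mem_compl] at hx
        rw [mem_union] at this
        tauto
      have := hA.2 _ (hcompl B hB.1) hsub
      obtain ⟨x, hx⟩ := hd
      rw [mem_inter] at hx
      have hx1 := hx.1
      rw [← this, mem_compl] at hx1
      exact hx1 hx.2
    · have h1 := h5 (A ∪ B) (a.1.mono subset_union_left) hu
      have hiu : A ∩ B ≠ univ := by
        intro h'; apply a.2.1
        rw [Finset.eq_univ_iff_forall]; intro x
        have : x ∈ A ∩ B := by rw [h']; exact mem_univ x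
        exact (mem_inter.1 this).1
      have h2 := h5 (A ∩ B) hd hiu
      have h3 := dd_submod univ G.fst G.snd A B
      rw [← card_cut, ← card_cut, ← card_cut, ← card_cut] at h3
      have hs : A ∩ B ∈ S := (mS _).2 ⟨hd, hiu, by omega⟩
      have k1 := hA.2 _ hs inter_subset_left
      have k2 := hB.2 _ hs inter_subset_right
      exact hne (k1.symm.trans k2)
  have hM7 : M.card ≤ 7 := by
    by_cases hinj : Set.InjOn G.cut (M : Set (Finset V))
    · have : (M.image G.cut).card = M.card := Finset.card_image_of_injOn hinj
      rw [← this]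
      refine le_trans (Finset.card_le_card ?_) hc
      rw [kCuts]
      exact Finset.image_subset_image (Finset.filter_subset _ _)
    · rw [Set.InjOn] at hinj
      push Not at hinj
      obtain ⟨A, hA, B, hB, hAB, hne⟩ := hinj
      have hA : A ∈ M := hA
      have hB : B ∈ M := hB
      have hd := hdisj A hA B hB hne
      have a := (mS A).1 ((mM A).1 hA).1
      have hu : A ∪ B = univ := by
        by_contra hu
        have h1 := h5 (A ∪ B) (a.1.mono subset_union_left) hu
        have h2 : G.cut (A ∪ B) = ∅ := by
          rw [Finset.eq_empty_iff_forall_notMem]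
          intro e he
          have h3 : e ∈ G.cut A ↔ e ∈ G.cut B := by rw [hAB]
          simp only [cut, mem_filter, mem_univ, true_and, mem_union] at h3 he
          have d1 : G.fst e ∈ A → G.fst e ∉ B := fun h => Finset.disjoint_left.1 hd h
          have d2 : G.snd e ∈ A → G.snd e ∉ B := fun h => Finset.disjoint_left.1 hd h
          tauto
        rw [h2] at h1; simp at h1
      have hsub : M ⊆ {A, B} := by
        intro C hC
        by_contra hn
        simp only [mem_insert, mem_singleton, not_or] at hn
        obtain ⟨x, hx⟩ := ((mS C).1 ((mM C).1 hC).1).1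
        have : x ∈ A ∪ B := by rw [hu]; exact mem_univ x
        rw [mem_union] at this
        rcases this with h' | h'
        · exact Finset.disjoint_left.1 (hdisj C hC A hA hn.1) hx h'
        · exact Finset.disjoint_left.1 (hdisj C hC B hB hn.2) hx h'
      have := Finset.card_le_card hsub
      have := Finset.card_le_two (a := A) (b := B)
      omega
  have hch : ∀ C : M, ∃ x, x ∈ C.1 := fun C => ((mS C.1).1 ((mM C.1).1 C.2).1).1
  choose r hr using hch
  refine ⟨M.attach.image r, ?_, ?_⟩
  · exact (Finset.card_image_le.trans (by rw [Finset.card_attach])).trans hM7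
  · intro A h1 h2 h3
    obtain ⟨C, hC, hCA⟩ := hmin A ((mS A).2 ⟨h1, h2, h3⟩)
    refine ⟨r ⟨C, hC⟩, mem_inter.2 ⟨hCA (hr _), ?_⟩⟩
    exact Finset.mem_image_of_mem _ (Finset.mem_attach _ _)

theorem sum_ind (A R : Finset V) : ∑ v ∈ A, ind R v = ((A ∩ R).card : ℤ) := by
  simp [ind, Finset.sum_ite_mem]

theorem net_eq (G : Multigraph V E) (σ : E → ℤ) (hσ : ∀ e, σ e = 1 ∨ σ e = -1) (v : V) :
    G.outDeg (fun e => decide (σ e = 1)) v - G.inDeg (fun e => decide (σ e = 1)) v =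
      ∑ e, σ e * dl G.fst G.snd {v} e := by
  rw [outDeg, inDeg, Finset.card_filter, Finset.card_filter]
  push_cast
  rw [← Finset.sum_sub_distrib]
  refine Finset.sum_congr rfl fun e _ => ?_
  rcases hσ e with h | h <;> simp [h, tail, head, dl, ind]

theorem final (G : Multigraph V E)
    (h5 : G.EdgeConnected 5) (hc : (G.kCuts 5).card ≤ 7) :
    G.Z3Connected := by
  intro β hβ
  obtain ⟨R, hR7, hR⟩ := hitting G h5 hc
  obtain ⟨R1, hR1, hR1c⟩ := Finset.exists_subset_card_eq (s := R) (n := min 5 R.card) (by omega)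
  have hR2c := Finset.card_sdiff_of_subset hR1
  set t : V → ℤ := fun v => 3 * (∑ e, dl G.fst G.snd {v} e) + 4 * ((β v).val : ℤ) with ht
  have hg : Good univ univ G.fst G.snd t (ind R1) (ind (R \ R1)) := by
    have par : ∀ v ∈ (univ : Finset V), (2 : ℤ) ∣ t v - ∑ e, dl G.fst G.snd {v} e := by
      intro v _
      simp only [ht]; omega
    refine ⟨fun e _ => ⟨mem_univ _, mem_univ _⟩, par, ?_, fun v => ?_, fun v => ?_, ?_, ?_⟩
    · simp only [ht]
      rw [Finset.sum_add_distrib, ← Finset.mul_sum, ← Finset.mul_sum, ← net_sum1]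
      have e1 : ∑ e, dl G.fst G.snd univ e = 0 :=
        Finset.sum_eq_zero fun e _ => by simp [dl, ind]
      have e2 : ((3 : ℕ) : ℤ) ∣ ∑ v, ((β v).val : ℤ) := by
        rw [← ZMod.intCast_zmod_eq_zero_iff_dvd]
        push_cast
        simpa [IsBoundary] using hβ
      rw [e1]; omega
    · have := ind_cases R1 v; omega
    · have := ind_cases (R \ R1) v; omega
    · left
      rw [sum_ind, sum_ind, univ_inter, univ_inter]
      omega
    · intro A _ hne hneW
      rw [sum_ind, sum_ind]
      have k1 := h5 A hne hneW
      have k2 := card_cut G A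
      have k3 : (2 : ℤ) ∣ ∑ v ∈ A, t v - dd univ G.fst G.snd A := by
        have h1 := dd_par univ G.fst G.snd A
        have h2 : (2 : ℤ) ∣ ∑ v ∈ A, t v - ∑ e, dl G.fst G.snd A e := by
          rw [net_sum1, ← Finset.sum_sub_distrib]
          exact Finset.dvd_sum fun v hv => par v (mem_univ v)
        omega
      have k4 : (A ∩ R).card ≤ (A ∩ R1).card + (A ∩ (R \ R1)).card := by
        rw [← Finset.card_union_of_disjoint, ← Finset.inter_union_distrib_left,
          Finset.union_sdiff_of_subset hR1]
        exact Finset.disjoint_sdiff.mono inter_subset_right inter_subset_right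
      have k5 : 6 ≤ (G.cut A).card ∨ 1 ≤ (A ∩ R).card := by
        by_cases h' : (G.cut A).card = 5
        · right; exact (hR A hne hneW h').card_pos
        · left; omega
      unfold nrm; omega
  obtain ⟨σ, hσ, hn⟩ := hg.solv
  refine ⟨fun e => decide (σ e = 1), fun v => ?_⟩
  rw [net_eq G σ hσ v]
  have h1 := hn v (mem_univ v)
  have h2 : ((3 : ℕ) : ℤ) ∣ ∑ e, σ e * dl G.fst G.snd {v} e - ((β v).val : ℤ) := by
    simp only [ht] at h1
    omega
  rw [← ZMod.intCast_zmod_eq_zero_iff_dvd] at h2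
  rw [Int.cast_sub, sub_eq_zero] at h2
  rw [h2]
  simp

/-- Every 5-edge-connected graph with at most seven edge-cuts of size 5 is
`ℤ₃`-connected. -/
theorem stmt_18 {V E : Type} [Fintype V] [DecidableEq V] [Fintype E] [DecidableEq E] (G : Multigraph V E)
    (h5 : G.EdgeConnected 5) (hc : (G.kCuts 5).card ≤ 7) :
    G.Z3Connected := by
  exact final G h5 hc

end Multigraph
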